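/- Let p be a prime and let G be a finite p-group with |G| = p^n ≥ p^2. Then cod(G) = {p^i | 0 ≤ i ≤ n-1} if and only if one of the following holds: (1) G is isomorphic to Z_{p^{n-1}} × Z_p; (2) n ≥ 4, G has nilpotence class exactly 2, and G is isomorphic to the semidirect product Z_{p^{n-1}} ⋊ Z_p where the generator of Z_p acts on a generator x of Z_{p^{n-1}} by x ↦ x^{1+p^{n-2}}; (3) G has maximal class (nilpotence class n-1) and |cd(G)| = 2. -/

import Mathlib

open CategoryTheory

/-- The degree of a complex representation: the dimension of the underlying vector space. -/
noncomputable def repDegree {G : Type} [Group G] (V : FDRep ℂ G) : ℕ :=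
  Module.finrank ℂ V

/-- The kernel of a representation of `G`, as a subgroup of `G`. -/
noncomputable def repKer {G : Type} [Group G] (V : FDRep ℂ G) : Subgroup G :=
  MonoidHom.ker (Representation.asGroupHom V.ρ)

/-- The codegree of a character: `|G : ker χ| / χ(1)`. -/
noncomputable def codegree {G : Type} [Group G] (V : FDRep ℂ G) : ℕ :=
  (repKer V).index / repDegree V

/-- `cod(G)`: the set of codegrees of the irreducible complex characters of `G`. -/
def codSet (G : Type) [Group G] : Set ℕ :=
  {m | ∃ V : FDRep ℂ G, Simple V ∧ codegree V = m}

/-- `cd(G)`: the set of degrees of the irreducible complex characters of `G`. -/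
def cdSet (G : Type) [Group G] : Set ℕ :=
  {m | ∃ V : FDRep ℂ G, Simple V ∧ repDegree V = m}

/-- The nilpotency class of `G`: the least `n` with `upperCentralSeries G n = ⊤`. -/
noncomputable def nilClass (G : Type) [Group G] : ℕ :=
  sInf {n | upperCentralSeries G n = ⊤}

open scoped Classical in
/-- The character of `G` induced from the linear character `lam` of the subgroup `H`. -/
noncomputable def indLinearChar {G : Type} [Group G] [Fintype G] (H : Subgroup G)
    (lam : H →* ℂˣ) : G → ℂ :=
  fun g => (∑ x : G, if h : x * g * x⁻¹ ∈ H then ((lam ⟨x * g * x⁻¹, h⟩ : ℂˣ) : ℂ) else 0) /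
    (Nat.card H : ℂ)

/-- A finite group is normally monomial if every irreducible complex character is induced
from a linear character of a normal subgroup. -/
def NormallyMonomial (G : Type) [Group G] [Fintype G] : Prop :=
  ∀ V : FDRep ℂ G, Simple V → ∃ (H : Subgroup G) (lam : H →* ℂˣ),
    H.Normal ∧ FDRep.character V = indLinearChar H lam

/-- Elementary irreducibility. -/
def Irr {G : Type} [Group G] (V : FDRep ℂ G) : Prop :=
  Nontrivial V ∧ ∀ W : Submodule ℂ V, (∀ g : G, ∀ w ∈ W, V.ρ g w ∈ W) → W = ⊥ ∨ W = ⊤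

theorem irr_of_simple {G : Type} [Group G] (V : FDRep ℂ G) (h : Simple V) : Irr V := by
  refine ⟨?_, ?_⟩
  · by_contra hV
    rw [not_nontrivial_iff_subsingleton] at hV
    apply id_nonzero V
    ext x
    exact Subsingleton.elim _ _
  · intro W hW
    let σ : Representation ℂ G W :=
      { toFun := fun g => (V.ρ g).restrict (hW g)
        map_one' := by ext x; simp
        map_mul' := by intro a b; ext x; simp }
    let f : FDRep.of σ ⟶ V :=
      ⟨InducedCategory.homMk (ModuleCat.ofHom W.subtype), fun g => by
        ext x
        rfl⟩
    have hinj : Function.Injective f.hom.hom.hom := Subtype.val_injective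
    have hmono : Mono f := by
      constructor
      intro Z a b hab
      ext x
      have h1 := congrArg (fun k => k.hom.hom.hom x) hab
      exact h1
    by_cases hf : f = 0
    · left
      rw [eq_bot_iff]
      intro w hw
      have h1 := congrArg (fun k => k.hom.hom.hom (⟨w, hw⟩ : W)) hf
      exact h1
    · right
      have hiso : IsIso f := (Simple.mono_isIso_iff_nonzero f).2 hf
      rw [eq_top_iff]
      intro v _
      have h1 : inv f ≫ f = 𝟙 _ := IsIso.inv_hom_id f
      have h2 := congrArg (fun k => k.hom.hom.hom v) h1
      have h3 : f.hom.hom.hom ((inv f).hom.hom.hom v) = v := h2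
      rw [← h3]
      exact ((inv f).hom.hom.hom v : W).2

theorem simple_of_irr {G : Type} [Group G] (V : FDRep ℂ G) (h : Irr V) : Simple V := by
  obtain ⟨hnt, h⟩ := h
  constructor
  intro Y f hmono
  constructor
  · intro hiso hf
    obtain ⟨v, hv⟩ := exists_ne (0 : V)
    have h1 : inv f ≫ f = 𝟙 _ := IsIso.inv_hom_id f
    have h0 : inv f ≫ f = inv f ≫ 0 := congrArg (fun k => inv f ≫ k) hf
    rw [h0, Limits.comp_zero] at h1
    have h2 := congrArg (fun k => k.hom.hom.hom v) h1
    exact hv h2.symm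
  · intro hf
    have hcomm : ∀ g x, f.hom.hom.hom (Y.ρ g x) = V.ρ g (f.hom.hom.hom x) := by
      intro g x
      have h1 := congrArg (fun k => k.hom.hom x) (f.comm g)
      exact h1
    have hinj : Function.Injective f.hom.hom.hom := by
      have hm : Mono ((Action.forget (FGModuleCat ℂ) G).map f) := inferInstance
      have hm2 : Mono ((forget₂ (FGModuleCat ℂ) (ModuleCat ℂ)).map
        ((Action.forget (FGModuleCat ℂ) G).map f)) := inferInstance
      exact (ModuleCat.mono_iff_injective _).1 hm2
    have hr := h (LinearMap.range f.hom.hom.hom) (by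
      rintro g w ⟨y, rfl⟩
      exact ⟨Y.ρ g y, hcomm g y⟩)
    rcases hr with hr | hr
    · exfalso
      apply hf
      rw [LinearMap.range_eq_bot] at hr
      ext x
      exact congrArg (fun k => k x) hr
    · have hsurj := LinearMap.range_eq_top.1 hr
      let e := LinearEquiv.ofBijective f.hom.hom.hom ⟨hinj, hsurj⟩
      let f' : V ⟶ Y := ⟨InducedCategory.homMk (ModuleCat.ofHom e.symm.toLinearMap), fun g => by
        ext x
        apply e.injective
        change e (e.symm (V.ρ g x)) = f.hom.hom.hom (Y.ρ g (e.symm x))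
        rw [hcomm, e.apply_symm_apply]
        change _ = V.ρ g (e (e.symm x))
        rw [e.apply_symm_apply]⟩
      refine ⟨f', ?_, ?_⟩
      · ext x
        exact e.symm_apply_apply x
      · ext x
        exact e.apply_symm_apply x

theorem mem_repKer {G : Type} [Group G] (V : FDRep ℂ G) (g : G) :
    g ∈ repKer V ↔ V.ρ g = 1 := by
  unfold repKer
  rw [MonoidHom.mem_ker, ← Units.val_inj, Representation.asGroupHom_apply]
  rfl

theorem scalar_of_comm {G : Type} [Group G] (V : FDRep ℂ G) (h : Irr V) (T : V →ₗ[ℂ] V)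
    (hT : ∀ g : G, ∀ v, T (V.ρ g v) = V.ρ g (T v)) : ∃ μ : ℂ, ∀ v, T v = μ • v := by
  obtain ⟨hnt, h⟩ := h
  obtain ⟨μ, hμ⟩ := Module.End.exists_eigenvalue T
  refine ⟨μ, ?_⟩
  have := h (Module.End.eigenspace T μ) (by
    intro g w hw
    rw [Module.End.mem_eigenspace_iff] at hw ⊢
    rw [hT, hw, map_smul])
  rcases this with h1 | h1
  · exact absurd h1 hμ
  · intro v
    have : v ∈ Module.End.eigenspace T μ := by rw [h1]; trivial
    exact Module.End.mem_eigenspace_iff.1 this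

theorem degree_one_of_scalar {G : Type} [Group G] (V : FDRep ℂ G) (h : Irr V)
    (hs : ∀ g : G, ∃ c : ℂ, ∀ v, V.ρ g v = c • v) : repDegree V = 1 := by
  obtain ⟨hnt, h⟩ := h
  obtain ⟨v, hv⟩ := exists_ne (0 : V)
  have := h (Submodule.span ℂ {v}) (by
    intro g w hw
    obtain ⟨c, hc⟩ := hs g
    rw [hc]
    exact Submodule.smul_mem _ _ hw)
  rcases this with h1 | h1
  · rw [Submodule.span_singleton_eq_bot] at h1
    exact absurd h1 hv
  · unfold repDegree
    rw [← finrank_top, ← h1, finrank_span_singleton hv]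

theorem degree_one_of_comm {G : Type} [Group G] (V : FDRep ℂ G) (h : Irr V)
    (hc : ∀ a b : G, a * b * a⁻¹ * b⁻¹ ∈ repKer V) : repDegree V = 1 := by
  apply degree_one_of_scalar V h
  intro g
  apply scalar_of_comm V h
  intro k v
  have h1 := (mem_repKer V _).1 (hc g k)
  have h2 : V.ρ (g * k) = V.ρ (k * g) := by
    have : g * k = (g * k * g⁻¹ * k⁻¹) * (k * g) := by group
    rw [this, map_mul, h1, one_mul]
  rw [map_mul, map_mul] at h2
  exact congrArg (fun f => f v) h2

theorem degree_pos {G : Type} [Group G] (V : FDRep ℂ G) (h : Irr V) : 0 < repDegree V := by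
  have := h.1
  exact Module.finrank_pos

theorem irr_of_degree_one {G : Type} [Group G] (V : FDRep ℂ G) (h : repDegree V = 1) : Irr V := by
  unfold repDegree at h
  refine ⟨Module.nontrivial_of_finrank_eq_succ h, fun W _ => ?_⟩
  have := is_simple_module_of_finrank_eq_one (A := ℂ) h
  exact eq_bot_or_eq_top W

theorem exists_linear {G : Type} [Group G] (l : G →* ℂˣ) :
    ∃ V : FDRep ℂ G, Simple V ∧ repDegree V = 1 ∧ repKer V = l.ker := by
  let σ : Representation ℂ G ℂ :=
    { toFun := fun g => (l g : ℂ) • LinearMap.id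
      map_one' := by ext; simp
      map_mul' := by intro a b; ext; simp [mul_comm] }
  have h1 : repDegree (FDRep.of σ) = 1 := Module.finrank_self ℂ
  refine ⟨FDRep.of σ, simple_of_irr _ (irr_of_degree_one _ h1), h1, ?_⟩
  ext g
  rw [mem_repKer, MonoidHom.mem_ker]
  constructor
  · intro h
    have h2 : σ g 1 = (1 : ℂ) := congrArg (fun f => f (1 : ℂ)) h
    ext
    simpa [σ] using h2
  · intro h
    change σ g = 1
    ext
    simp [σ, h]

theorem linear_of_scalar {G : Type} [Group G] (V : FDRep ℂ G) (h : Irr V) (H : Type) [Group H]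
    (f : H →* G) (hs : ∀ x : H, ∃ c : ℂ, ∀ v, V.ρ (f x) v = c • v) :
    ∃ l : H →* ℂˣ, (∀ x v, V.ρ (f x) v = (l x : ℂ) • v) ∧ l.ker = (repKer V).comap f := by
  have := h.1
  obtain ⟨v, hv⟩ := exists_ne (0 : V)
  choose c hc using hs
  let l0 : H →* ℂ :=
    { toFun := c
      map_one' := by
        have := hc 1 v
        rw [map_one, map_one] at this
        have h2 : (c 1 - 1) • v = 0 := by rw [sub_smul, ← this]; simp
        exact sub_eq_zero.1 ((smul_eq_zero.1 h2).resolve_right hv)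
      map_mul' := by
        intro a b
        have h1 := hc (a * b) v
        rw [map_mul, map_mul] at h1
        have h3 : (V.ρ (f a) * V.ρ (f b)) v = c a • c b • v := by
          change V.ρ (f a) (V.ρ (f b) v) = _
          rw [hc b, hc a]
        rw [h3, smul_smul] at h1
        have h2 : (c a * c b - c (a * b)) • v = 0 := by rw [sub_smul, h1, sub_self]
        exact (sub_eq_zero.1 ((smul_eq_zero.1 h2).resolve_right hv)).symm }
  have hl : ∀ x, ((l0.toHomUnits x : ℂˣ) : ℂ) = c x := fun x => rfl
  refine ⟨l0.toHomUnits, fun x v => by rw [hl]; exact hc x v, ?_⟩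
  ext x
  rw [MonoidHom.mem_ker, Subgroup.mem_comap, mem_repKer, ← Units.val_inj, hl]
  constructor
  · intro h1
    ext w
    rw [hc, h1]
    simp
  · intro h1
    have h2 := hc x v
    rw [h1] at h2
    have h2 : (c x - 1) • v = 0 := by rw [sub_smul, ← h2]; simp
    exact sub_eq_zero.1 ((smul_eq_zero.1 h2).resolve_right hv)

theorem linear_of_degree_one {G : Type} [Group G] (V : FDRep ℂ G) (h : repDegree V = 1) :
    ∃ l : G →* ℂˣ, l.ker = repKer V := by
  obtain ⟨l, -, hl⟩ := linear_of_scalar V (irr_of_degree_one V h) G (MonoidHom.id G) (by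
    intro g
    obtain ⟨v, hv, hspan⟩ := finrank_eq_one_iff'.1 h
    obtain ⟨c, hc⟩ := hspan (V.ρ g v)
    refine ⟨c, fun w => ?_⟩
    obtain ⟨d, rfl⟩ := hspan w
    change V.ρ g (d • v) = _
    rw [map_smul, ← hc, smul_comm])
  exact ⟨l, by rw [hl, Subgroup.comap_id]⟩

theorem cyclic_of_degree_one {G : Type} [Group G] [Finite G] (V : FDRep ℂ G)
    (h : repDegree V = 1) (K : Subgroup G) [K.Normal] (hK : K = repKer V) : IsCyclic (G ⧸ K) := by
  obtain ⟨l, hl⟩ := linear_of_degree_one V h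
  rw [← hl] at hK
  subst hK
  have hinj : Function.Injective
      ((Units.coeHom ℂ).comp (QuotientGroup.kerLift l)) := by
    rw [MonoidHom.coe_comp]
    exact Units.val_injective.comp (QuotientGroup.kerLift_injective l)
  exact isCyclic_of_injective_ringHom _ hinj

instance repKer_normal {G : Type} [Group G] (V : FDRep ℂ G) : (repKer V).Normal := by
  unfold repKer; infer_instance

theorem center_cyclic {G : Type} [Group G] [Finite G] (V : FDRep ℂ G) (h : Irr V) :
    IsCyclic (Subgroup.center (G ⧸ repKer V)) := by
  let H := (Subgroup.center (G ⧸ repKer V)).comap (QuotientGroup.mk' (repKer V))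
  obtain ⟨l, hl, hker⟩ := linear_of_scalar V h H H.subtype (by
    intro x
    apply scalar_of_comm V h
    intro g v
    have hx := x.2
    have hx : QuotientGroup.mk' (repKer V) (x : G) ∈ Subgroup.center (G ⧸ repKer V) := x.2
    have h1 := Subgroup.mem_center_iff.1 hx (QuotientGroup.mk' (repKer V) g)
    rw [← map_mul, ← map_mul] at h1
    have h2 := QuotientGroup.eq.1 h1
    rw [mem_repKer] at h2
    have h3 : V.ρ ((x : G) * g) = V.ρ (g * x) := by
      have : (x : G) * g = (g * x) * ((g * x)⁻¹ * (x * g)) := by group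
      rw [this, map_mul, h2, mul_one]
    rw [map_mul, map_mul] at h3
    exact congrArg (fun f => f v) h3)
  have hc : IsCyclic (H ⧸ l.ker) := by
    have hinj : Function.Injective
        ((Units.coeHom ℂ).comp (QuotientGroup.kerLift l)) := by
      rw [MonoidHom.coe_comp]
      exact Units.val_injective.comp (QuotientGroup.kerLift_injective l)
    exact isCyclic_of_injective_ringHom _ hinj
  let f : H →* Subgroup.center (G ⧸ repKer V) :=
    ((QuotientGroup.mk' (repKer V)).comp H.subtype).codRestrict _ (fun x => x.2)
  have hf : ∀ x ∈ l.ker, f x = 1 := by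
    intro x hx
    rw [hker] at hx
    apply Subtype.ext
    exact (QuotientGroup.eq_one_iff _).2 hx
  let f2 := QuotientGroup.lift l.ker f hf
  apply isCyclic_of_surjective f2
  rintro ⟨y, hy⟩
  obtain ⟨x, rfl⟩ := QuotientGroup.mk'_surjective _ y
  exact ⟨QuotientGroup.mk' _ ⟨x, hy⟩, rfl⟩

theorem exists_pullback {G : Type} [Group G] (K : Subgroup G) [K.Normal] (V : FDRep ℂ (G ⧸ K))
    (h : Simple V) : ∃ V' : FDRep ℂ G, Simple V' ∧ repDegree V' = repDegree V ∧
      repKer V' = (repKer V).comap (QuotientGroup.mk' K) := by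
  have hV := irr_of_simple V h
  let σ : Representation ℂ G V := MonoidHom.comp V.ρ (QuotientGroup.mk' K)
  refine ⟨FDRep.of σ, simple_of_irr _ ⟨hV.1, ?_⟩, rfl, ?_⟩
  · intro W hW
    apply hV.2 W
    intro g w hw
    obtain ⟨g, rfl⟩ := QuotientGroup.mk'_surjective _ g
    exact hW g w hw
  · ext g
    rw [Subgroup.mem_comap, mem_repKer, mem_repKer]
    rfl

theorem exists_simple_not_mem {G : Type} [Group G] [Finite G] (g : G) (hg : g ≠ 1) :
    ∃ V : FDRep ℂ G, Simple V ∧ g ∉ repKer V := by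
  let R := MonoidAlgebra ℂ G
  let x : R := MonoidAlgebra.of ℂ G g - 1
  have hx : x ≠ 0 := by
    intro h
    apply hg
    have h1 : MonoidAlgebra.of ℂ G g = MonoidAlgebra.of ℂ G 1 := by
      rw [map_one]; exact sub_eq_zero.1 h
    exact MonoidAlgebra.of_injective h1
  have hj : Module.jacobson R R = ⊥ := IsSemisimpleModule.jacobson_eq_bot R R
  have : ∃ m : Submodule R R, IsCoatom m ∧ x ∉ m := by
    by_contra hcon
    push Not at hcon
    apply hx
    rw [← Submodule.mem_bot R, ← hj, Module.jacobson, Submodule.mem_sInf]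
    exact fun m hm => hcon m hm
  obtain ⟨m, hm, hxm⟩ := this
  let M := R ⧸ m
  have hfin : Module.Finite ℂ R := inferInstance
  have hfin2 : Module.Finite ℂ M := Module.Finite.trans R M
  have hsimp : IsSimpleModule R M := isSimpleModule_iff_isCoatom.2 hm
  let σ : Representation ℂ G M := Representation.ofModule' M
  have hσ : ∀ a v, σ a v = MonoidAlgebra.of ℂ G a • v := fun a v => rfl
  refine ⟨FDRep.of σ, simple_of_irr _ ⟨hsimp.nontrivial, ?_⟩, ?_⟩
  · intro W hW
    let W' : Submodule R M :=
      { carrier := W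
        add_mem' := W.add_mem
        zero_mem' := W.zero_mem
        smul_mem' := by
          intro c v hv
          induction c using MonoidAlgebra.induction_on with
          | of a => exact hW a v hv
          | add a b ha hb => rw [add_smul]; exact W.add_mem ha hb
          | smul r a ha => rw [smul_assoc]; exact W.smul_mem r ha }
    rcases eq_bot_or_eq_top W' with h | h
    · left
      rw [eq_bot_iff]
      intro w hw
      have : w ∈ W' := hw
      rw [h] at this
      exact this
    · right
      rw [eq_top_iff]
      intro w _
      have : w ∈ W' := by rw [h]; trivial
      exact this
  · rw [mem_repKer]
    intro h
    apply hxm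
    have h1 : σ g (Submodule.Quotient.mk 1) = (Submodule.Quotient.mk 1 : M) :=
      congrArg (fun f => f (Submodule.Quotient.mk 1 : M)) h
    rw [hσ, ← Submodule.Quotient.mk_smul, Submodule.Quotient.eq] at h1
    simpa [x] using h1

theorem eq_or_top_of_prime_index {G : Type} [Group G] [Finite G] (A H : Subgroup G)
    (hA : A.index.Prime) (hAH : A ≤ H) : H = A ∨ H = ⊤ := by
  have h1 := Subgroup.index_dvd_of_le hAH
  rcases (Nat.dvd_prime hA).1 h1 with h | h
  · right; exact Subgroup.index_eq_one.1 h
  · left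
    have h2 := Subgroup.relIndex_mul_index hAH
    rw [h] at h2
    have h3 : A.relIndex H = 1 := by
      have := hA.pos
      exact Nat.eq_of_mul_eq_mul_right this (by rw [h2, one_mul])
    exact le_antisymm (Subgroup.relIndex_eq_one.1 h3) hAH

theorem exists_common_eigenvector {G : Type} [Group G] (V : FDRep ℂ G) [Nontrivial V]
    (A : Subgroup G) (hA : ∀ a ∈ A, ∀ b ∈ A, a * b = b * a) :
    ∃ w : V, w ≠ 0 ∧ ∀ a ∈ A, ∃ c : ℂ, V.ρ a w = c • w := by
  let S : Set (Submodule ℂ V) := {W | W ≠ ⊥ ∧ ∀ a ∈ A, ∀ w ∈ W, V.ρ a w ∈ W}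
  have hS : S.Nonempty := ⟨⊤, top_ne_bot, fun _ _ _ _ => trivial⟩
  obtain ⟨W, ⟨hW0, hWA⟩, hmin⟩ := WellFounded.has_min
    (wellFounded_lt : WellFounded (fun a b : Submodule ℂ V => a < b)) S hS
  obtain ⟨w, hw, hw0⟩ := Submodule.exists_mem_ne_zero_of_ne_bot hW0
  refine ⟨w, hw0, ?_⟩
  intro a ha
  have hntW : Nontrivial W := Submodule.nontrivial_iff_ne_bot.2 hW0
  obtain ⟨μ, hμ⟩ := Module.End.exists_eigenvalue ((V.ρ a).restrict (hWA a ha))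
  obtain ⟨⟨u, huW⟩, hu⟩ := hμ.exists_hasEigenvector
  have hu0 : u ≠ 0 := by
    intro h; apply hu.2; exact Subtype.ext h
  have hu1 : V.ρ a u = μ • u := congrArg Subtype.val hu.apply_eq_smul
  refine ⟨μ, ?_⟩
  have hmem : W ⊓ Module.End.eigenspace (V.ρ a) μ ∈ S := by
    refine ⟨?_, ?_⟩
    · intro hbot
      apply hu0
      rw [← Submodule.mem_bot ℂ, ← hbot]
      exact ⟨huW, Module.End.mem_eigenspace_iff.2 hu1⟩
    · intro b hb v hv
      refine ⟨hWA b hb v hv.1, ?_⟩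
      have h2 := Module.End.mem_eigenspace_iff.1 hv.2
      apply Module.End.mem_eigenspace_iff.2
      have h3 : V.ρ a * V.ρ b = V.ρ b * V.ρ a := by rw [← map_mul, ← map_mul, hA a ha b hb]
      have h4 : V.ρ a (V.ρ b v) = V.ρ b (V.ρ a v) := congrArg (fun f => f v) h3
      rw [h4, h2, map_smul]
  have := hmin _ hmem
  have h5 : W ⊓ Module.End.eigenspace (V.ρ a) μ = W := by
    by_contra hne
    exact this (lt_of_le_of_ne inf_le_left hne)
  rw [← h5] at hw
  exact Module.End.mem_eigenspace_iff.1 hw.2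

theorem degree_one_or_prime {G : Type} [Group G] [Finite G] (V : FDRep ℂ G) (h : Irr V)
    (A : Subgroup G) [A.Normal] (hA : ∀ a ∈ A, ∀ b ∈ A, a * b = b * a) (hp : A.index.Prime) :
    repDegree V = 1 ∨ repDegree V = A.index := by
  have hnt := h.1
  obtain ⟨w, hw0, hw⟩ := exists_common_eigenvector V A hA
  have hmulap : ∀ a b v, V.ρ (a * b) v = V.ρ a (V.ρ b v) := by
    intro a b v; rw [map_mul]; rfl
  have hconj : ∀ g, ∀ a ∈ A, g⁻¹ * a * g ∈ A := by
    intro g a ha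
    have := (inferInstance : A.Normal).conj_mem a ha g⁻¹
    simpa using this
  choose! l hl using hw
  have hne : ∀ g, V.ρ g w ≠ 0 := by
    intro g hg
    apply hw0
    have : V.ρ (g⁻¹ * g) w = 0 := by rw [hmulap, hg, map_zero]
    simpa using this
  have hact : ∀ g, ∀ a ∈ A, V.ρ a (V.ρ g w) = l (g⁻¹ * a * g) • V.ρ g w := by
    intro g a ha
    rw [← hmulap]
    have : a * g = g * (g⁻¹ * a * g) := by group
    rw [this, hmulap, hl _ (hconj g a ha), map_smul]
  have hfq : Fintype (G ⧸ A) := Fintype.ofFinite _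
  let e : G ⧸ A → V := fun i => V.ρ i.out w
  have hspan : Submodule.span ℂ (Set.range e) = ⊤ := by
    refine (h.2 _ ?_).resolve_left ?_
    · intro g v hv
      induction hv using Submodule.span_induction with
      | zero => rw [map_zero]; exact Submodule.zero_mem _
      | add x y _ _ hx hy => rw [map_add]; exact Submodule.add_mem _ hx hy
      | smul c x _ hx => rw [map_smul]; exact Submodule.smul_mem _ _ hx
      | mem x hx =>
        obtain ⟨i, rfl⟩ := hx
        let j : G ⧸ A := QuotientGroup.mk (g * i.out)
        obtain ⟨a, ha, hj⟩ : ∃ a ∈ A, g * i.out = j.out * a := by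
          refine ⟨(j.out)⁻¹ * (g * i.out), ?_, by group⟩
          apply QuotientGroup.eq.1
          exact j.out_eq'
        have h1 : V.ρ g (e i) = l a • e j := by
          change V.ρ g (V.ρ i.out w) = _ • V.ρ j.out w
          rw [← hmulap, hj, hmulap, hl a ha, map_smul]
        rw [h1]
        exact Submodule.smul_mem _ _ (Submodule.subset_span ⟨j, rfl⟩)
    · intro hbot
      have : e 1 ∈ Submodule.span ℂ (Set.range e) := Submodule.subset_span ⟨1, rfl⟩
      rw [hbot] at this
      exact hne _ this
  have hcard : Fintype.card (G ⧸ A) = A.index := by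
    rw [Subgroup.index, Nat.card_eq_fintype_card]
  let T : Subgroup G :=
    { carrier := {g | ∀ a ∈ A, l (g⁻¹ * a * g) = l a}
      one_mem' := by intro a ha; simp
      mul_mem' := by
        intro g k hg hk a ha
        have h1 := hk _ (hconj g a ha)
        rw [hg a ha] at h1
        rw [← h1]
        congr 1
        group
      inv_mem' := by
        intro g hg a ha
        have h1 := hg (g * a * g⁻¹) ((inferInstance : A.Normal).conj_mem a ha g)
        rw [inv_inv, ← h1]
        congr 1
        group }
  have hAT : A ≤ T := by
    intro g hg a ha
    congr 1
    rw [mul_assoc, hA a ha g hg]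
    group
  rcases eq_or_top_of_prime_index A T hp hAT with hT | hT
  · right
    have hinj : Function.Injective (fun i : G ⧸ A => fun a : A => l ((i.out)⁻¹ * a * i.out)) := by
      intro i j hij
      have hmem : (i.out)⁻¹ * j.out ∈ T := by
        intro a ha
        have h1 := congrFun hij ⟨i.out * a * i.out⁻¹,
          (inferInstance : A.Normal).conj_mem a ha i.out⟩
        have h2 : (i.out)⁻¹ * (i.out * a * i.out⁻¹) * i.out = a := by group
        have h3 : ((i.out)⁻¹ * j.out)⁻¹ * a * ((i.out)⁻¹ * j.out) =
          (j.out)⁻¹ * (i.out * a * i.out⁻¹) * j.out := by group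
        rw [h3]
        simp only [h2] at h1
        exact h1.symm
      rw [hT] at hmem
      have := QuotientGroup.eq.2 hmem
      rw [QuotientGroup.out_eq', QuotientGroup.out_eq'] at this
      exact this
    have hind := Module.End.independent_iInf_maxGenEigenspace_of_forall_mapsTo
      (fun a : A => V.ρ (a : G)) (by
        intro a b φ
        apply Module.End.mapsTo_maxGenEigenspace_of_comm
        change V.ρ (b : G) * V.ρ (a : G) = V.ρ (a : G) * V.ρ (b : G)
        rw [← map_mul, ← map_mul, hA _ a.2 _ b.2])
    have hli : LinearIndependent ℂ e := (hind.comp hinj).linearIndependent _ (by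
      intro i
      rw [Function.comp_apply, Submodule.mem_iInf]
      intro a
      apply Module.End.eigenspace_le_maxGenEigenspace
      rw [Module.End.mem_eigenspace_iff]
      exact hact i.out a a.2) (fun i => hne _)
    have := linearIndependent_iff_card_eq_finrank_span.1 hli
    rw [← hcard, this, Set.finrank, hspan, finrank_top]
    rfl
  · left
    have hscal : ∀ a ∈ A, ∀ v, V.ρ a v = l a • v := by
      intro a ha v
      have hv : v ∈ Submodule.span ℂ (Set.range e) := by rw [hspan]; trivial
      induction hv using Submodule.span_induction with
      | zero => rw [map_zero, smul_zero]
      | add x y _ _ hx hy => rw [map_add, hx, hy, smul_add]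
      | smul c x _ hx => rw [map_smul, hx, smul_comm]
      | mem x hx =>
        obtain ⟨i, rfl⟩ := hx
        have h1 := hact i.out a ha
        have h2 : i.out ∈ T := by rw [hT]; trivial
        rw [h2 a ha] at h1
        exact h1
    apply degree_one_of_scalar V h
    intro b
    by_cases hb : b ∈ A
    · exact ⟨_, hscal b hb⟩
    apply scalar_of_comm V h
    let C : Subgroup G :=
      (Subgroup.centralizer {Representation.asGroupHom V.ρ b}).comap
        (Representation.asGroupHom V.ρ)
    have hC : ∀ g, g ∈ C ↔ V.ρ b * V.ρ g = V.ρ g * V.ρ b := by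
      intro g
      rw [Subgroup.mem_comap, Subgroup.mem_centralizer_singleton_iff, ← Units.val_inj]
      simp only [Units.val_mul, Representation.asGroupHom_apply]
      exact eq_comm
    have hAC : A ≤ C := by
      intro a ha
      rw [hC]
      ext v
      change V.ρ b (V.ρ a v) = V.ρ a (V.ρ b v)
      rw [hscal a ha, hscal a ha, map_smul]
    have hCtop : C = ⊤ := (eq_or_top_of_prime_index A C hp hAC).resolve_left (by
      intro h1
      apply hb
      rw [← h1, hC])
    intro g v
    have : g ∈ C := by rw [hCtop]; trivial
    exact congrArg (fun f => f v) ((hC g).1 this)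

theorem comm_of_simple_spectrum {M ι : Type} [AddCommGroup M] [Module ℂ M] (b : Module.Basis ι ℂ M)
    (X S T : M →ₗ[ℂ] M) (ev : ι → ℂ) (hev : Function.Injective ev)
    (hX : ∀ i, X (b i) = ev i • b i) (hS : X * S = S * X) (hT : X * T = T * X) :
    S * T = T * S := by
  have key : ∀ R : M →ₗ[ℂ] M, X * R = R * X → ∀ i, ∃ c : ℂ, R (b i) = c • b i := by
    intro R hR i
    refine ⟨b.repr (R (b i)) i, ?_⟩
    apply b.repr.injective
    ext j
    have h1 : ∀ w, b.repr (X w) j = ev j * b.repr w j := by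
      intro w
      have : (b.coord j).comp X = ev j • b.coord j := by
        apply b.ext
        intro k
        rw [LinearMap.comp_apply, hX]
        by_cases hk : k = j
        · subst hk; simp
        · simp [Finsupp.single_apply, hk]
      exact congrArg (fun f => f w) this
    have h2 : X (R (b i)) = ev i • R (b i) := by
      have : X (R (b i)) = R (X (b i)) := congrArg (fun f => f (b i)) hR
      rw [this, hX, map_smul]
    have h3 := h1 (R (b i))
    rw [h2, map_smul, Finsupp.smul_apply, smul_eq_mul] at h3
    by_cases hj : i = j
    · subst hj; simp
    · have h4 : (ev i - ev j) * b.repr (R (b i)) j = 0 := by rw [sub_mul, h3, sub_self]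
      have h5 := (mul_eq_zero.1 h4).resolve_left (sub_ne_zero.2 (fun h => hj (hev h)))
      simp [h5, Finsupp.single_apply, hj]
  apply b.ext
  intro i
  obtain ⟨c, hc⟩ := key S hS i
  obtain ⟨d, hd⟩ := key T hT i
  change S (T (b i)) = T (S (b i))
  rw [hc, hd, map_smul, map_smul, hc, hd, smul_comm]

theorem exists_abelian_index {G : Type} [Group G] [Finite G] (p n : ℕ) (hp : p.Prime)
    (hcard : Nat.card G = p ^ n) (V : FDRep ℂ G) (h : Irr V) (hdeg : repDegree V = p)
    (hker : repKer V = ⊥) : ∃ A : Subgroup G, A.Normal ∧ (∀ a ∈ A, ∀ b ∈ A, a * b = b * a) ∧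
      A.index = p := by
  have hnt := h.1
  have hfp : Fact p.Prime := ⟨hp⟩
  have hmulap : ∀ a b v, V.ρ (a * b) v = V.ρ a (V.ρ b v) := by
    intro a b v; rw [map_mul]; rfl
  have hinjρ : ∀ g, V.ρ g = 1 → g = 1 := by
    intro g hg
    rw [← mem_repKer, hker] at hg
    exact hg
  have hpG : IsPGroup p G := IsPGroup.of_card hcard
  have hncomm : ∃ x : G, x ∉ Subgroup.center G ∧ ∀ g, g * x * g⁻¹ * x⁻¹ ∈ Subgroup.center G := by
    have hnt2 : Nontrivial (G ⧸ Subgroup.center G) := by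
      by_contra hcon
      rw [not_nontrivial_iff_subsingleton] at hcon
      have : repDegree V = 1 := by
        apply degree_one_of_comm V h
        intro a b
        have hb : b ∈ Subgroup.center G := by
          rw [← QuotientGroup.eq_one_iff]; exact Subsingleton.elim _ _
        have := Subgroup.mem_center_iff.1 hb a
        rw [this]
        simp [Subgroup.one_mem]
      rw [hdeg] at this
      exact hp.one_lt.ne' this
    have := (hpG.to_quotient (Subgroup.center G)).center_nontrivial
    obtain ⟨⟨y, hy⟩, hy1⟩ := exists_ne (1 : Subgroup.center (G ⧸ Subgroup.center G))
    obtain ⟨x, rfl⟩ := QuotientGroup.mk'_surjective _ y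
    refine ⟨x, ?_, ?_⟩
    · intro hx
      apply hy1
      apply Subtype.ext
      exact (QuotientGroup.eq_one_iff x).2 hx
    · intro g
      have h1 := Subgroup.mem_center_iff.1 hy (QuotientGroup.mk' _ g)
      rw [← QuotientGroup.eq_one_iff]
      change QuotientGroup.mk' _ (g * x * g⁻¹ * x⁻¹) = 1
      rw [map_mul, map_mul, map_mul, map_inv, map_inv, h1]
      group
  obtain ⟨x, hx, hxc⟩ := hncomm
  obtain ⟨l, hl, hlk⟩ := linear_of_scalar V h (Subgroup.center G) (Subgroup.center G).subtype (by
    intro z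
    apply scalar_of_comm V h
    intro g v
    have := Subgroup.mem_center_iff.1 z.2 g
    change V.ρ (z : G) (V.ρ g v) = V.ρ g (V.ρ (z : G) v)
    rw [← hmulap, ← hmulap, this])
  let ζ : G →* ℂˣ :=
    { toFun := fun g => l ⟨_, hxc g⟩
      map_one' := by
        rw [← map_one l]; congr 1; apply Subtype.ext; simp
      map_mul' := by
        intro a b
        rw [← map_mul]
        congr 1
        apply Subtype.ext
        change a * b * x * (a * b)⁻¹ * x⁻¹ = (a * x * a⁻¹ * x⁻¹) * (b * x * b⁻¹ * x⁻¹)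
        have h1 := Subgroup.mem_center_iff.1 (hxc b) (a * x * a⁻¹ * x⁻¹)
        have h2 := Subgroup.mem_center_iff.1 (hxc b) a
        rw [h1]
        calc a * b * x * (a * b)⁻¹ * x⁻¹ = (a * (b * x * b⁻¹ * x⁻¹)) * x * a⁻¹ * x⁻¹ := by group
          _ = _ := by rw [h2]; group }
  have hζ : ∀ g v, V.ρ (g * x * g⁻¹ * x⁻¹) v = (ζ g : ℂ) • v := fun g v => hl ⟨_, hxc g⟩ v
  have hζker : ∀ g, g ∈ ζ.ker ↔ x * g = g * x := by
    intro g
    rw [MonoidHom.mem_ker]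
    constructor
    · intro h1
      have h2 : V.ρ (g * x * g⁻¹ * x⁻¹) = 1 := by
        ext v; rw [hζ, h1]; simp
      have h3 := hinjρ _ h2
      have : g * x = (g * x * g⁻¹ * x⁻¹) * (x * g) := by group
      rw [this, h3, one_mul]
    · intro h1
      have h2 : g * x * g⁻¹ * x⁻¹ = 1 := by rw [← h1]; group
      change l ⟨_, hxc g⟩ = 1
      rw [← map_one l]
      congr 1
      apply Subtype.ext
      exact h2
  obtain ⟨μ, hμ⟩ := Module.End.exists_eigenvalue (V.ρ x)
  obtain ⟨v, hv⟩ := hμ.exists_hasEigenvector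
  have hv1 := hv.apply_eq_smul
  have hne : ∀ g, V.ρ g v ≠ 0 := by
    intro g hg
    apply hv.2
    have : V.ρ (g⁻¹ * g) v = 0 := by rw [hmulap, hg, map_zero]
    simpa using this
  have hμ0 : μ ≠ 0 := by
    intro h0
    apply hne x
    rw [hv1, h0, zero_smul]
  have hev : ∀ g, V.ρ x (V.ρ g v) = ((((ζ g)⁻¹ : ℂˣ) : ℂ) * μ) • V.ρ g v := by
    intro g
    have h1 : V.ρ g (V.ρ x v) = (ζ g : ℂ) • V.ρ x (V.ρ g v) := by
      rw [← hmulap, ← hmulap, ← hζ, ← hmulap]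
      congr 2
      group
    rw [hv1, map_smul] at h1
    rw [mul_smul, h1, smul_smul]
    simp
  have hsec : ∀ t : ζ.range, ∃ g, ζ g = t := fun t => t.2
  choose γ hγ using hsec
  let ev : ζ.range → ℂ := fun t => (((t : ℂˣ)⁻¹ : ℂˣ) : ℂ) * μ
  have hevinj : Function.Injective ev := by
    intro s t hst
    have h1 := mul_right_cancel₀ hμ0 hst
    apply Subtype.ext
    exact inv_injective (Units.val_injective h1)
  let e : ζ.range → V := fun t => V.ρ (γ t) v
  have hevec : ∀ t, V.ρ x (e t) = ev t • e t := by
    intro t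
    have := hev (γ t)
    rw [hγ] at this
    exact this
  have hli : LinearIndependent ℂ e := Module.End.eigenvectors_linearIndependent' (V.ρ x) ev hevinj e
    (fun t => ⟨Module.End.mem_eigenspace_iff.2 (hevec t), hne _⟩)
  have hfr : Finite ζ.range := Finite.of_surjective ζ.rangeRestrict ζ.rangeRestrict_surjective
  have hft : Fintype ζ.range := Fintype.ofFinite _
  have hle : Fintype.card ζ.range ≤ p := by
    rw [← hdeg]; exact hli.fintype_card_le_finrank
  have hidx : ζ.ker.index = Fintype.card ζ.range := by
    rw [Subgroup.index_ker, Nat.card_eq_fintype_card]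
  have hne1 : ζ.ker.index ≠ 1 := by
    intro h1
    rw [Subgroup.index_eq_one] at h1
    apply hx
    rw [Subgroup.mem_center_iff]
    intro g
    exact ((hζker g).1 (by rw [h1]; trivial)).symm
  have hidxp : ζ.ker.index = p := by
    have hd : ζ.ker.index ∣ p ^ n := by rw [← hcard]; exact Subgroup.index_dvd_card _
    obtain ⟨k, -, hk⟩ := (Nat.dvd_prime_pow hp).1 hd
    rcases k with _ | k
    · exact absurd (by simpa using hk) hne1
    · rw [← hidx, hk] at hle
      apply le_antisymm
      · rw [hk]; exact hle
      · rw [hk, pow_succ]; exact Nat.le_mul_of_pos_left _ (pow_pos hp.pos k)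
  refine ⟨ζ.ker, inferInstance, ?_, hidxp⟩
  have hnemp : Nonempty ζ.range := ⟨1⟩
  have hc2 : Fintype.card ζ.range = Module.finrank ℂ V := by
    rw [← hidx, hidxp]; exact hdeg.symm
  let b := basisOfLinearIndependentOfCardEqFinrank hli hc2
  intro a ha c hc
  have h1 : V.ρ a * V.ρ c = V.ρ c * V.ρ a := by
    apply comm_of_simple_spectrum b (V.ρ x) (V.ρ a) (V.ρ c) ev hevinj
    · intro i
      simp only [b, coe_basisOfLinearIndependentOfCardEqFinrank]
      exact hevec i
    · rw [← map_mul, ← map_mul, (hζker a).1 ha]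
    · rw [← map_mul, ← map_mul, (hζker c).1 hc]
  have h2 : V.ρ (a * c * (c * a)⁻¹) = 1 := by
    rw [map_mul, map_mul, h1, ← map_mul, ← map_mul, mul_inv_cancel, map_one]
  exact mul_inv_eq_one.1 (hinjρ _ h2)


/-! ### Group theory -/

/-- In a finite cyclic group, `orderOf z ∣ orderOf k` forces `z ∈ ⟨k⟩`. -/
theorem mem_zpowers_of_orderOf_dvd {C : Type*} [Group C] [Finite C] [IsCyclic C] (z k : C)
    (h : orderOf z ∣ orderOf k) : z ∈ Subgroup.zpowers k := by
  classical
  haveI := Fintype.ofFinite C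
  have h1 := IsCyclic.card_pow_eq_one_le (α := C) (orderOf_pos k)
  have h2 : Finset.univ.filter (fun x => x ∈ Subgroup.zpowers k) ⊆
      Finset.univ.filter (fun x : C => x ^ orderOf k = 1) := by
    intro x hx
    simp only [Finset.mem_filter, Finset.mem_univ, true_and] at hx ⊢
    exact orderOf_dvd_iff_pow_eq_one.mp (orderOf_dvd_of_mem_zpowers hx)
  have h3 : (Finset.univ.filter (fun x => x ∈ Subgroup.zpowers k)).card = orderOf k := by
    rw [← Nat.card_zpowers, Nat.card_eq_fintype_card, Fintype.card_subtype]
  have h4 := Finset.eq_of_subset_of_card_le h2 (by rw [h3]; exact h1)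
  have h5 : z ∈ Finset.univ.filter (fun x : C => x ^ orderOf k = 1) := by
    simp only [Finset.mem_filter, Finset.mem_univ, true_and]
    exact orderOf_dvd_iff_pow_eq_one.mp h
  rw [← h4] at h5
  simpa using h5

/-- A nontrivial normal subgroup of a finite `p`-group meets the center. -/
theorem normal_inf_center_nontrivial {G : Type} [Group G] [Finite G] (p n : ℕ) (hp : p.Prime)
    (hcard : Nat.card G = p ^ n) (K : Subgroup G) [K.Normal] (hK : K ≠ ⊥) :
    ∃ k ∈ K, k ∈ Subgroup.center G ∧ k ≠ 1 := by
  haveI := Fact.mk hp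
  have hG : IsPGroup p G := IsPGroup.of_card hcard
  have hKp : IsPGroup p K := hG.to_subgroup K
  have hdvd : p ∣ Nat.card K := by
    rcases hKp.card_eq_or_dvd with h | h
    · exact absurd (Subgroup.card_eq_one.mp h) hK
    · exact h
  have hCA : IsPGroup p (ConjAct G) := hG
  obtain ⟨b, hb, hne⟩ := hCA.exists_fixed_point_of_prime_dvd_card_of_fixed_point K hdvd
    (a := (1 : K)) (by intro g; exact smul_one g)
  refine ⟨b, b.2, ?_, fun h => hne (by ext; exact h.symm)⟩
  rw [Subgroup.mem_center_iff]
  intro g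
  have := congrArg Subtype.val (hb (ConjAct.toConjAct g))
  rw [ConjAct.Subgroup.val_conj_smul, ConjAct.toConjAct_smul] at this
  exact mul_inv_eq_iff_eq_mul.mp this

/-- In a `p`-group with cyclic center, there is a smallest nontrivial normal subgroup. -/
theorem exists_monolith {G : Type} [Group G] [Finite G] (p n : ℕ) (hp : p.Prime)
    (hcard : Nat.card G = p ^ n) (hc : IsCyclic (Subgroup.center G)) (hnt : Nontrivial G) :
    ∃ z ∈ Subgroup.center G, orderOf z = p ∧
      (∀ k ∈ Subgroup.center G, k ≠ 1 → z ∈ Subgroup.zpowers k) ∧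
      (∀ K : Subgroup G, K.Normal → K ≠ ⊥ → z ∈ K) := by
  haveI := Fact.mk hp
  have hG : IsPGroup p G := IsPGroup.of_card hcard
  have hcn := hG.center_nontrivial
  obtain ⟨z, hz⟩ := exists_prime_orderOf_dvd_card' (G := Subgroup.center G) p
    (by rcases (hG.to_subgroup (Subgroup.center G)).card_eq_or_dvd with h | h
        · exact absurd h (Finite.one_lt_card (α := Subgroup.center G)).ne'
        · exact h)
  have key : ∀ k ∈ Subgroup.center G, k ≠ 1 → (z : G) ∈ Subgroup.zpowers k := by
    intro k hk hk1
    let k' : Subgroup.center G := ⟨k, hk⟩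
    have hk'1 : k' ≠ 1 := fun h => hk1 (congrArg Subtype.val h)
    have hd : orderOf z ∣ orderOf k' := by
      rw [hz]
      obtain ⟨j, hj⟩ := (hG.to_subgroup (Subgroup.center G)).exists_orderOf_eq_pow k'
      rw [hj]
      apply dvd_pow_self
      rintro rfl
      exact hk'1 (orderOf_eq_one_iff.mp (by simpa using hj))
    obtain ⟨i, hi⟩ := mem_zpowers_of_orderOf_dvd z k' hd
    exact ⟨i, by simpa using congrArg Subtype.val hi⟩
  refine ⟨z, z.2, by rw [Subgroup.orderOf_coe, hz], key, ?_⟩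
  intro K hKn hK
  obtain ⟨k, hkK, hkc, hk1⟩ := normal_inf_center_nontrivial p n hp hcard K hK
  exact (Subgroup.zpowers_le.mpr hkK) (key k hkc hk1)

/-- For a nonabelian group with an abelian normal subgroup of prime index, `|A| = |G'| |Z(G)|`. -/
theorem card_abelian_eq {G : Type} [Group G] [Finite G] (A : Subgroup G) [hAn : A.Normal]
    (hA : ∀ a ∈ A, ∀ b ∈ A, a * b = b * a) (hpr : A.index.Prime)
    (hnc : ∃ a b : G, a * b ≠ b * a) :
    Nat.card A = Nat.card (commutator G) * Nat.card (Subgroup.center G) := by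
  have hne : ∃ b, b ∉ A := by
    by_contra h
    push Not at h
    obtain ⟨x, y, hxy⟩ := hnc
    exact hxy (hA x (h x) y (h y))
  obtain ⟨b, hb⟩ := hne
  -- the centralizer of A is A
  have hcen : ∀ g, (∀ a ∈ A, g * a = a * g) → g ∈ A := by
    intro g hg
    by_contra hgA
    have h1 : A ≤ Subgroup.centralizer (A : Set G) := fun a ha => by
      rw [Subgroup.mem_centralizer_iff]; intro h hh; exact hA h hh a ha
    have hgc : g ∈ Subgroup.centralizer (A : Set G) := by
      rw [Subgroup.mem_centralizer_iff]; intro h hh; exact (hg h hh).symm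
    have h2 : Subgroup.centralizer (A : Set G) = ⊤ := by
      rcases eq_or_top_of_prime_index A _ hpr h1 with h | h
      · rw [h] at hgc; exact absurd hgc hgA
      · exact h
    have h3 : Subgroup.centralizer ({g} : Set G) = ⊤ := by
      rcases eq_or_top_of_prime_index A (Subgroup.centralizer ({g} : Set G)) hpr
        (fun a ha => by
          rw [Subgroup.mem_centralizer_iff]; rintro h rfl
          exact hg a ha) with h | h
      · have : g ∈ Subgroup.centralizer ({g} : Set G) := by
          rw [Subgroup.mem_centralizer_iff]; rintro h rfl; rfl
        rw [h] at this; exact absurd this hgA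
      · exact h
    have hgcen : ∀ x, g * x = x * g := by
      intro x
      have : x ∈ Subgroup.centralizer ({g} : Set G) := h3 ▸ Subgroup.mem_top x
      rw [Subgroup.mem_centralizer_iff] at this
      exact this g rfl
    -- now the center contains A and g
    have h4 : Subgroup.center G = ⊤ := by
      rcases eq_or_top_of_prime_index A (Subgroup.center G) hpr
        (fun a ha => by
          rw [Subgroup.mem_center_iff]; intro x
          have : x ∈ Subgroup.centralizer (A : Set G) := h2 ▸ Subgroup.mem_top x
          rw [Subgroup.mem_centralizer_iff] at this
          exact (this a ha).symm) with h | h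
      · have : g ∈ Subgroup.center G := by
          rw [Subgroup.mem_center_iff]; intro x; exact (hgcen x).symm
        rw [h] at this; exact absurd this hgA
      · exact h
    obtain ⟨x, y, hxy⟩ := hnc
    have : y ∈ Subgroup.center G := h4 ▸ Subgroup.mem_top y
    rw [Subgroup.mem_center_iff] at this
    exact hxy (this x)
  have hZA : Subgroup.center G ≤ A := by
    intro z hz
    rw [Subgroup.mem_center_iff] at hz
    exact hcen z fun a _ => (hz a).symm
  have hconjA : ∀ a ∈ A, b * a * b⁻¹ ∈ A := fun a ha => hAn.conj_mem a ha b
  let φ : A →* G :=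
    { toFun := fun a => b * a * b⁻¹ * (a : G)⁻¹
      map_one' := by simp
      map_mul' := by
        intro x y
        have e1 := hA (b * y * b⁻¹) (hconjA y y.2) (x : G)⁻¹ (A.inv_mem x.2)
        have e2 := hA (x : G)⁻¹ (A.inv_mem x.2) (y : G)⁻¹ (A.inv_mem y.2)
        calc b * ((x * y : A) : G) * b⁻¹ * ((x * y : A) : G)⁻¹
            = b * x * b⁻¹ * (b * y * b⁻¹) * ((y : G)⁻¹ * (x : G)⁻¹) := by
              simp only [Subgroup.coe_mul]; group
          _ = b * x * b⁻¹ * (b * y * b⁻¹) * ((x : G)⁻¹ * (y : G)⁻¹) := by rw [e2]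
          _ = b * x * b⁻¹ * ((b * y * b⁻¹) * (x : G)⁻¹) * (y : G)⁻¹ := by group
          _ = b * x * b⁻¹ * ((x : G)⁻¹ * (b * y * b⁻¹)) * (y : G)⁻¹ := by rw [e1]
          _ = _ := by group }
  have hφ : ∀ a : A, φ a = b * a * b⁻¹ * (a : G)⁻¹ := fun _ => rfl
  have hker : ∀ a : A, a ∈ φ.ker ↔ (a : G) ∈ Subgroup.center G := by
    intro a
    rw [MonoidHom.mem_ker, hφ, Subgroup.mem_center_iff]
    constructor
    · intro h
      have hba : b * a = a * b := by
        have := mul_inv_eq_one.mp h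
        exact mul_inv_eq_iff_eq_mul.mp this
      have h3 : Subgroup.centralizer ({(a : G)} : Set G) = ⊤ := by
        rcases eq_or_top_of_prime_index A (Subgroup.centralizer ({(a : G)} : Set G)) hpr
          (fun a' ha' => by
            rw [Subgroup.mem_centralizer_iff]; rintro h rfl
            exact hA a a.2 a' ha') with h | h
        · have : b ∈ Subgroup.centralizer ({(a : G)} : Set G) := by
            rw [Subgroup.mem_centralizer_iff]; rintro h rfl; exact hba.symm
          rw [h] at this; exact absurd this hb
        · exact h
      intro x
      have : x ∈ Subgroup.centralizer ({(a : G)} : Set G) := h3 ▸ Subgroup.mem_top x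
      rw [Subgroup.mem_centralizer_iff] at this
      exact (this a rfl).symm
    · intro h
      rw [h b]; group
  let R := φ.range
  have hRA : R ≤ A := by
    rintro _ ⟨a, rfl⟩
    rw [hφ]
    exact A.mul_mem (hconjA a a.2) (A.inv_mem a.2)
  -- b normalises R, hence R is normal
  have hbR : ∀ r ∈ R, b * r * b⁻¹ ∈ R := by
    rintro _ ⟨a, rfl⟩
    refine ⟨⟨b * a * b⁻¹, hconjA a a.2⟩, ?_⟩
    rw [hφ, hφ]
    group
  have hconjmul : ∀ g h r : G, (g * h) * r * (g * h)⁻¹ = g * (h * r * h⁻¹) * g⁻¹ := by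
    intros; group
  have hAR : ∀ a ∈ A, ∀ r ∈ R, a * r * a⁻¹ ∈ R := by
    intro a ha r hr
    rw [hA a ha r (hRA hr)]; simpa using hr
  let N : Subgroup G := Subgroup.normalizer (R : Set G)
  have hmemN : ∀ g, (∀ r ∈ R, g * r * g⁻¹ ∈ R) → g ∈ N := by
    intro g hg
    have : (R.map (MulAut.conj g).toMonoidHom) = R := by
      apply Subgroup.eq_of_le_of_card_ge
      · rintro _ ⟨r, hr, rfl⟩
        exact hg r hr
      · rw [Nat.card_congr (R.equivMapOfInjective (MulAut.conj g).toMonoidHom (MulAut.conj g).injective).toEquiv]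
    rw [Subgroup.mem_normalizer_iff]
    intro r
    constructor
    · exact hg r
    · intro h
      rw [← this] at h
      obtain ⟨r', hr', h'⟩ := h
      have : r' = r := (MulAut.conj g).injective h'
      exact this ▸ hr'
  have hN : N = ⊤ := by
    rcases eq_or_top_of_prime_index A N hpr (fun a ha => hmemN a (hAR a ha)) with h | h
    · have : b ∈ N := hmemN b hbR
      rw [h] at this; exact absurd this hb
    · exact h
  haveI hRn : R.Normal := Subgroup.normalizer_eq_top_iff.mp hN
  have hcomm1 : ∀ g, ∀ a ∈ A, QuotientGroup.mk' R g * QuotientGroup.mk' R a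
      = QuotientGroup.mk' R a * QuotientGroup.mk' R g := by
    intro g a ha
    let T := (Subgroup.centralizer ({QuotientGroup.mk' R a} : Set (G ⧸ R))).comap
      (QuotientGroup.mk' R)
    have hT : T = ⊤ := by
      rcases eq_or_top_of_prime_index A T hpr (fun a' ha' => by
          rw [Subgroup.mem_comap, Subgroup.mem_centralizer_iff]; rintro h rfl
          rw [← map_mul, ← map_mul, hA a ha a' ha']) with h | h
      · have : b ∈ T := by
          rw [Subgroup.mem_comap, Subgroup.mem_centralizer_iff]; rintro h rfl
          rw [← map_mul, ← map_mul]
          symm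
          rw [← mul_inv_eq_one, ← map_inv, ← map_mul, QuotientGroup.mk'_apply,
            QuotientGroup.eq_one_iff]
          refine ⟨⟨a, ha⟩, ?_⟩
          rw [hφ]; simp [mul_assoc]
        rw [h] at this; exact absurd this hb
      · exact h
    have : g ∈ T := hT ▸ Subgroup.mem_top g
    rw [Subgroup.mem_comap, Subgroup.mem_centralizer_iff] at this
    exact (this _ rfl).symm
  have hcomm2 : ∀ g h : G, QuotientGroup.mk' R g * QuotientGroup.mk' R h
      = QuotientGroup.mk' R h * QuotientGroup.mk' R g := by
    intro g h
    by_cases hg : h ∈ A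
    · exact hcomm1 g h hg
    let T := (Subgroup.centralizer ({QuotientGroup.mk' R h} : Set (G ⧸ R))).comap
      (QuotientGroup.mk' R)
    have hT : T = ⊤ := by
      rcases eq_or_top_of_prime_index A T hpr (fun a' ha' => by
          rw [Subgroup.mem_comap, Subgroup.mem_centralizer_iff]; rintro h rfl
          exact hcomm1 _ _ ha') with h' | h'
      · have : h ∈ T := by
          rw [Subgroup.mem_comap, Subgroup.mem_centralizer_iff]; rintro h rfl
          rfl
        rw [h'] at this; exact absurd this hg
      · exact h'
    have : g ∈ T := hT ▸ Subgroup.mem_top g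
    rw [Subgroup.mem_comap, Subgroup.mem_centralizer_iff] at this
    exact (this _ rfl).symm
  have hRcomm : R = commutator G := by
    apply le_antisymm
    · rintro _ ⟨a, rfl⟩
      rw [hφ, ← commutatorElement_def, commutator_def]
      exact Subgroup.commutator_mem_commutator (Subgroup.mem_top _) (Subgroup.mem_top _)
    · rw [commutator_def, Subgroup.commutator_le]
      intro g _ h _
      rw [← QuotientGroup.eq_one_iff, commutatorElement_def]
      change QuotientGroup.mk' R (g * h * g⁻¹ * h⁻¹) = 1
      simp only [map_mul, map_inv]
      rw [hcomm2 g h]; group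
  have hcardker : Nat.card φ.ker = Nat.card (Subgroup.center G) := by
    have : φ.ker = (Subgroup.center G).subgroupOf A := by
      ext a; rw [hker, Subgroup.mem_subgroupOf]
    rw [this]
    exact Nat.card_congr (Subgroup.subgroupOfEquivOfLe hZA).toEquiv
  have := Subgroup.card_mul_index φ.ker
  rw [Subgroup.index_ker, hcardker] at this
  rw [← this, ← hRcomm, mul_comm]


/-- A finite group is commutative if a central subgroup has prime index. -/
theorem comm_of_central_index {G : Type} [Group G] (A : Subgroup G)
    (hA : A ≤ Subgroup.center G) (hpr : A.index.Prime) (a b : G) : a * b = b * a := by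
  haveI : A.Normal := ⟨fun a ha g => by
    rw [Subgroup.mem_center_iff.mp (hA ha) g, mul_inv_cancel_right]; exact ha⟩
  haveI := Fact.mk hpr
  haveI : IsCyclic (G ⧸ A) := isCyclic_of_prime_card (p := A.index) rfl
  exact (MonoidHom.isMulCommutative_of_isCyclic_of_ker_le_center (QuotientGroup.mk' A)
    (by rw [QuotientGroup.ker_mk']; exact hA)).is_comm.comm a b

/-- A subgroup of order `p` of a group of order `p^n`, if normal, is central. -/
theorem central_of_card_prime {G : Type} [Group G] [Finite G] (p n : ℕ) (hp : p.Prime)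
    (hcard : Nat.card G = p ^ n) (K : Subgroup G) [K.Normal] (hK : Nat.card K = p) :
    K ≤ Subgroup.center G := by
  obtain ⟨k, hkK, hkc, hk1⟩ := normal_inf_center_nontrivial p n hp hcard K
    (by rintro rfl; rw [Subgroup.card_bot] at hK; exact hp.one_lt.ne hK)
  intro x hx
  haveI := Fact.mk hp
  have := mem_zpowers_of_prime_card hK (g := (⟨k, hkK⟩ : K)) (g' := ⟨x, hx⟩)
    (fun h => hk1 (congrArg Subtype.val h))
  obtain ⟨i, hi⟩ := this
  have : k ^ i = x := by simpa using congrArg Subtype.val hi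
  rw [← this]
  exact (Subgroup.center G).zpow_mem hkc i

theorem not_cyclic_of_noncomm {G : Type} [Group G] (hnc : ∃ a b : G, a * b ≠ b * a) :
    ¬ IsCyclic G := by
  intro h
  obtain ⟨a, b, hab⟩ := hnc
  exact hab (h.isMulCommutative.is_comm.comm a b)

theorem order_lift {G H : Type} [Group G] [Group H] [Finite G] (p j : ℕ) (hp : p.Prime)
    (f : G →* H) (y z : G) (hz1 : z ≠ 1) (hfz : f z = 1) (hzy : z ∈ Subgroup.zpowers y)
    (hfy : orderOf (f y) = p ^ j) (hcard : Nat.card G = p ^ (j + 2)) (hnc : ¬ IsCyclic G) :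
    orderOf y = p ^ (j + 1) := by
  obtain ⟨k, hk, hky⟩ := (Nat.dvd_prime_pow hp).mp (hcard ▸ orderOf_dvd_natCard y)
  have h1 : j ≤ k := by
    have := orderOf_map_dvd f y
    rw [hfy, hky] at this
    exact (Nat.pow_dvd_pow_iff_le_right hp.one_lt).mp this
  have h2 : k ≠ j + 2 := by
    rintro rfl
    exact hnc (isCyclic_of_orderOf_eq_card y (by rw [hky, hcard]))
  have h3 : k ≠ j := by
    rintro rfl
    obtain ⟨i, rfl⟩ := hzy
    apply hz1
    change f (y ^ i) = 1 at hfz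
    change y ^ i = 1
    rw [map_zpow, ← orderOf_dvd_iff_zpow_eq_one, hfy] at hfz
    rw [← orderOf_dvd_iff_zpow_eq_one, hky]
    exact hfz
  have : k = j + 1 := by omega
  rw [hky, this]

theorem pow_commutator {G : Type} [Group G] (y g w : G) (hw : ∀ x, w * x = x * w)
    (h : y * g = w * (g * y)) (k : ℕ) : y ^ k * g = w ^ k * (g * y ^ k) := by
  induction k with
  | zero => simp
  | succ k ih =>
    have hwk : ∀ x, w ^ k * x = x * w ^ k := fun x => ((show Commute w x from hw x).pow_left k).eq
    calc y ^ (k + 1) * g = y * (y ^ k * g) := by rw [pow_succ']; group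
      _ = y * (w ^ k * (g * y ^ k)) := by rw [ih]
      _ = (y * w ^ k) * (g * y ^ k) := by group
      _ = w ^ k * (y * g) * y ^ k := by rw [← hwk]; group
      _ = w ^ k * (w * (g * y)) * y ^ k := by rw [h]
      _ = w ^ (k + 1) * (g * y ^ (k + 1)) := by rw [pow_succ, pow_succ']; group

/-- If all commutators lie in a central subgroup of exponent `p`, then `p`-th powers are central. -/
theorem pow_central {G : Type} [Group G] (p : ℕ) (y z : G) (hz : z ∈ Subgroup.center G)
    (hzp : z ^ p = 1) (hc : ∀ g, y * g * y⁻¹ * g⁻¹ ∈ Subgroup.zpowers z) :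
    y ^ p ∈ Subgroup.center G := by
  rw [Subgroup.mem_center_iff]
  intro g
  obtain ⟨i, hi⟩ := hc g
  change z ^ i = _ at hi
  have hw : ∀ x, z ^ i * x = x * z ^ i := by
    have := (Subgroup.center G).zpow_mem hz i
    rw [Subgroup.mem_center_iff] at this
    exact fun x => (this x).symm
  have h := pow_commutator y g (z ^ i) hw (by rw [hi]; group) p
  rw [← zpow_natCast (z ^ i), ← zpow_mul, mul_comm, zpow_mul, zpow_natCast, hzp, one_zpow,
    one_mul] at h
  exact h.symm

/-- The key property: for every `i ≤ n-1` there is a suitable quotient. -/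
def PP (p n : ℕ) (G : Type) [Group G] : Prop :=
  ∀ i ≤ n - 1, ∃ (H : Type) (_ : Group H) (f : G →* H), Function.Surjective f ∧
    ((Nat.card H = p ^ i ∧ IsCyclic H) ∨
      (Nat.card H = p ^ (i + 1) ∧ (∃ a b : H, a * b ≠ b * a) ∧ IsCyclic (Subgroup.center H)))

theorem conj_pow_eq {G : Type} [Group G] (y b : G) (r : ℤ) (h : b * y * b⁻¹ = y ^ r) (k : ℕ) :
    b ^ k * y * (b ^ k)⁻¹ = y ^ (r ^ k) := by
  induction k with
  | zero => simp
  | succ k ih =>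
    calc b ^ (k + 1) * y * (b ^ (k + 1))⁻¹ = b * (b ^ k * y * (b ^ k)⁻¹) * b⁻¹ := by
          rw [pow_succ']; group
      _ = b * y ^ (r ^ k) * b⁻¹ := by rw [ih]
      _ = (b * y * b⁻¹) ^ (r ^ k) := by rw [conj_zpow]
      _ = y ^ (r ^ (k + 1)) := by rw [h, ← zpow_mul, pow_succ']

theorem one_add_pow_expand (s : ℤ) (p : ℕ) : ∃ t : ℤ, (1 + s) ^ p = 1 + p * s + s ^ 2 * t := by
  induction p with
  | zero => exact ⟨0, by simp⟩
  | succ k ih =>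
    obtain ⟨t, ht⟩ := ih
    refine ⟨k + t + s * t, ?_⟩
    rw [pow_succ, ht]; push_cast; ring

theorem dvd_of_pow_dvd (p m : ℕ) (hp : p.Prime) (hm : 4 ≤ m) (r : ℤ)
    (h1 : (p : ℤ) ^ m ∣ r ^ p - 1) (h2 : (p : ℤ) ^ (m - 2) ∣ r - 1) :
    (p : ℤ) ^ (m - 1) ∣ r - 1 := by
  obtain ⟨t, ht⟩ := one_add_pow_expand (r - 1) p
  rw [add_sub_cancel] at ht
  have h3 : (p : ℤ) ^ m ∣ (r - 1) ^ 2 * t := by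
    apply Dvd.dvd.mul_right
    have := pow_dvd_pow_of_dvd h2 2
    rw [← pow_mul] at this
    exact (pow_dvd_pow _ (by omega)).trans this
  have h4 : (p : ℤ) ^ m ∣ p * (r - 1) := by
    have : (p : ℤ) * (r - 1) = (r ^ p - 1) - (r - 1) ^ 2 * t := by rw [ht]; ring
    rw [this]; exact dvd_sub h1 h3
  have hm' : m = (m - 1) + 1 := by omega
  rw [hm', pow_succ'] at h4
  exact (mul_dvd_mul_iff_left (by exact_mod_cast hp.ne_zero)).mp h4

theorem normal_of_index_prime {G : Type} [Group G] [Finite G] (p n : ℕ) (hp : p.Prime)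
    (hn : n ≠ 0) (hcard : Nat.card G = p ^ n) (C : Subgroup G) (hC : C.index = p) : C.Normal := by
  apply Subgroup.normal_of_index_eq_minFac_card
  rw [hC, hcard, hp.pow_minFac hn]


theorem map_index_eq {G : Type} [Group G] (N A : Subgroup G) [N.Normal] (hNA : N ≤ A) :
    (A.map (QuotientGroup.mk' N)).index = A.index := by
  rw [Subgroup.index_map, QuotientGroup.ker_mk', sup_eq_left.mpr hNA,
    MonoidHom.range_eq_top.mpr (QuotientGroup.mk'_surjective N), Subgroup.index_top, mul_one]

theorem center_card_eq {G : Type} [Group G] [Finite G]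
    (A : Subgroup G) [hAn : A.Normal] (hA : ∀ a ∈ A, ∀ b ∈ A, a * b = b * a)
    (hpr : A.index.Prime) (N : Subgroup G) [N.Normal] (hNA : N ≤ A) (hNc : N ≤ commutator G)
    (hnc : ∃ a b : G ⧸ N, a * b ≠ b * a) :
    Nat.card (Subgroup.center G) = Nat.card (Subgroup.center (G ⧸ N)) := by
  have hncG : ∃ a b : G, a * b ≠ b * a := by
    obtain ⟨a, b, hab⟩ := hnc
    obtain ⟨a, rfl⟩ := QuotientGroup.mk'_surjective N a
    obtain ⟨b, rfl⟩ := QuotientGroup.mk'_surjective N b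
    exact ⟨a, b, fun h => hab (by rw [← map_mul, ← map_mul, h])⟩
  have e1 := card_abelian_eq A hA hpr hncG
  haveI : (A.map (QuotientGroup.mk' N)).Normal :=
    hAn.map _ (QuotientGroup.mk'_surjective N)
  have hi := map_index_eq N A hNA
  have e2 := card_abelian_eq (A.map (QuotientGroup.mk' N))
    (by rintro _ ⟨a, ha, rfl⟩ _ ⟨b, hb, rfl⟩; rw [← map_mul, ← map_mul, hA a ha b hb])
    (by rw [hi]; exact hpr) hnc
  have hcm : commutator (G ⧸ N) = (commutator G).map (QuotientGroup.mk' N) := by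
    rw [commutator_def, commutator_def, Subgroup.map_commutator,
      ← MonoidHom.range_eq_map, MonoidHom.range_eq_top.mpr (QuotientGroup.mk'_surjective N)]
  have hi2 := map_index_eq N (commutator G) hNc
  rw [← hcm] at hi2
  have c1 := Subgroup.card_mul_index A
  have c2 := Subgroup.card_mul_index (A.map (QuotientGroup.mk' N))
  have c3 := Subgroup.card_mul_index (commutator G)
  have c4 := Subgroup.card_mul_index (commutator (G ⧸ N))
  rw [hi] at c2
  rw [hi2] at c4
  have p1 : 0 < A.index := hpr.pos
  have p2 : 0 < (commutator G).index := Nat.pos_of_ne_zero Subgroup.index_ne_zero_of_finite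
  have p3 : 0 < Nat.card (commutator G) := Nat.card_pos
  have p4 : 0 < Nat.card (commutator (G ⧸ N)) := Nat.card_pos
  generalize Nat.card (commutator G) = x at *
  generalize Nat.card (commutator (G ⧸ N)) = x' at *
  generalize Nat.card (Subgroup.center G) = u at *
  generalize Nat.card (Subgroup.center (G ⧸ N)) = u' at *
  generalize A.index = i at *
  generalize (commutator G).index = j at *
  rw [e1, ← c3] at c1
  rw [e2, ← c4] at c2
  -- u i = j,  u' i = j
  have q1 : u * i = j := by
    apply Nat.eq_of_mul_eq_mul_left p3; rw [← c1]; ring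
  have q2 : u' * i = j := by
    apply Nat.eq_of_mul_eq_mul_left p4; rw [← c2]; ring
  exact Nat.eq_of_mul_eq_mul_right p1 (q1.trans q2.symm)

/-- The extension step of the second type cannot occur. -/
theorem typeII_contra {G : Type} [Group G] [Finite G] (p m : ℕ) (hp : p.Prime) (hm : 4 ≤ m)
    (hcard : Nat.card G = p ^ (m + 1)) (hnc : ¬ IsCyclic G) (z : G)
    (hzc : z ∈ Subgroup.center G) (hz : orderOf z = p)
    (hzz : ∀ k ∈ Subgroup.center G, k ≠ 1 → z ∈ Subgroup.zpowers k)
    (Q : Type) [Group Q] (f : G →* Q) (hf : Function.Surjective f)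
    (hker : f.ker = Subgroup.zpowers z) (hQ : Nat.card Q = p ^ m)
    (zb : Q) (hzb : zb ∈ Subgroup.center Q) (hzbo : orderOf zb = p)
    (hcomm : ∀ a b : Q, a * b * a⁻¹ * b⁻¹ ∈ Subgroup.zpowers zb)
    (yb : Q) (hyb : orderOf yb = p ^ (m - 1)) : ∀ a b : Q, a * b = b * a := by
  have hz1 : z ≠ 1 := by rintro rfl; rw [orderOf_one] at hz; exact hp.one_lt.ne hz
  have hfz : f z = 1 := by
    rw [← MonoidHom.mem_ker, hker]; exact Subgroup.mem_zpowers z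
  obtain ⟨y, rfl⟩ := hf yb
  have h1 : f y ^ p ∈ Subgroup.center Q :=
    pow_central p (f y) zb hzb (by rw [← hzbo]; exact pow_orderOf_eq_one zb) (fun g => hcomm _ _)
  have h2 : (y ^ p) ^ p ∈ Subgroup.center G := by
    apply pow_central p (y ^ p) z hzc (by rw [← hz]; exact pow_orderOf_eq_one z)
    intro g
    rw [← hker, MonoidHom.mem_ker]
    simp only [map_mul, map_pow, map_inv]
    rw [← Subgroup.mem_center_iff.mp h1 (f g)]; group
  have h3 : (y ^ p) ^ p ≠ 1 := by
    intro h
    have : f y ^ (p ^ 2) = 1 := by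
      rw [pow_two, pow_mul, ← map_pow, ← map_pow, h, map_one]
    rw [← orderOf_dvd_iff_pow_eq_one, hyb] at this
    have := (Nat.pow_dvd_pow_iff_le_right hp.one_lt).mp this
    omega
  have h4 : z ∈ Subgroup.zpowers y := by
    have := hzz _ h2 h3
    refine (Subgroup.zpowers_le.mpr ?_) this
    rw [← pow_mul]; exact Subgroup.npow_mem_zpowers _ _
  have h5 : orderOf y = p ^ m := by
    have := order_lift p (m - 1) hp f y z hz1 hfz h4 hyb
      (by rw [hcard]; congr 1; omega) hnc
    rw [this]; congr 1; omega
  have hidx : (Subgroup.zpowers y).index = p := by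
    have := Subgroup.card_mul_index (Subgroup.zpowers y)
    rw [Nat.card_zpowers, h5, hcard, pow_succ] at this
    exact Nat.eq_of_mul_eq_mul_left (pow_pos hp.pos m) this
  have hnorm := normal_of_index_prime p (m + 1) hp (by omega) hcard _ hidx
  have hcen : f y ∈ Subgroup.center Q := by
    rw [Subgroup.mem_center_iff]
    intro bb
    obtain ⟨b, rfl⟩ := hf bb
    obtain ⟨r, hr⟩ := hnorm.conj_mem y (Subgroup.mem_zpowers y) b
    change y ^ r = _ at hr
    have hbp : b ^ p ∈ Subgroup.zpowers y := by
      rw [← hidx]; exact Subgroup.pow_index_mem _ b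
    have e1 : y ^ (r ^ p) = y := by
      rw [← conj_pow_eq y b r hr.symm p]
      obtain ⟨i, hi⟩ := hbp
      change y ^ i = _ at hi
      rw [← hi]; group
    have d1 : (p : ℤ) ^ m ∣ r ^ p - 1 := by
      have : y ^ (r ^ p - 1) = 1 := by rw [zpow_sub, e1]; group
      rw [← orderOf_dvd_iff_zpow_eq_one, h5] at this
      exact_mod_cast this
    have d2 : (p : ℤ) ^ (m - 2) ∣ r - 1 := by
      have e2 : b * (y ^ p) ^ p * b⁻¹ = (y ^ p) ^ p := by
        rw [Subgroup.mem_center_iff.mp h2 b]; group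
      have e3 : b * (y ^ p) ^ p * b⁻¹ = y ^ (r * (p ^ 2 : ℕ)) := by
        rw [← pow_mul, ← pow_two, ← conj_pow, ← hr, ← zpow_natCast, ← zpow_mul]
      have e4 : y ^ ((r - 1) * (p ^ 2 : ℕ)) = 1 := by
        rw [sub_mul, zpow_sub, ← e3, e2, one_mul, zpow_natCast, ← pow_mul, pow_two]; group
      rw [← orderOf_dvd_iff_zpow_eq_one, h5] at e4
      push_cast at e4
      have hm' : m = (m - 2) + 2 := by omega
      rw [hm', pow_add] at e4
      exact (mul_dvd_mul_iff_right (by have := hp.ne_zero; positivity)).mp e4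
    have d3 := dvd_of_pow_dvd p m hp hm r d1 d2
    have e5 : (f y) ^ (r - 1) = 1 := by
      rw [← orderOf_dvd_iff_zpow_eq_one, hyb]; exact_mod_cast d3
    have e6 : f b * f y * (f b)⁻¹ = f y := by
      rw [← map_mul, ← map_inv, ← map_mul, ← hr, map_zpow]
      rw [zpow_sub, zpow_one, mul_inv_eq_one] at e5
      exact e5
    exact mul_inv_eq_iff_eq_mul.mp e6
  apply comm_of_central_index (Subgroup.zpowers (f y)) (Subgroup.zpowers_le.mpr hcen)
  haveI : Finite Q := Finite.of_surjective f hf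
  have := Subgroup.card_mul_index (Subgroup.zpowers (f y))
  have hm' : m = (m - 1) + 1 := by omega
  rw [Nat.card_zpowers, hyb, hQ, hm', pow_succ, Nat.add_sub_cancel] at this
  rw [Nat.eq_of_mul_eq_mul_left (pow_pos hp.pos _) this]
  exact hp

/-- The second alternative in the group-theoretic classification. -/
def TypeII (p n : ℕ) (G : Type) [Group G] : Prop :=
  4 ≤ n ∧ ∃ z ∈ Subgroup.center G, orderOf z = p ∧
    (∀ a b : G, a * b * a⁻¹ * b⁻¹ ∈ Subgroup.zpowers z) ∧ ∃ y : G, orderOf y = p ^ (n - 1)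

theorem PP_quotient {G : Type} [Group G] [Finite G] (p m : ℕ) (hp : p.Prime)
    (hcard : Nat.card G = p ^ (m + 1)) (N : Subgroup G) [N.Normal]
    (hN : ∀ K : Subgroup G, K.Normal → K ≠ ⊥ → N ≤ K) (hPP : PP p (m + 1) G) (hm : 1 ≤ m) :
    PP p m (G ⧸ N) := by
  intro i hi
  obtain ⟨H, hH, f, hf, h⟩ := hPP i (by omega)
  have hle : Nat.card H ≤ p ^ m := by
    rcases h with h | h
    · rw [h.1]; exact Nat.pow_le_pow_right hp.pos (by omega)
    · rw [h.1]; exact Nat.pow_le_pow_right hp.pos (by omega)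
  have hk : f.ker ≠ ⊥ := by
    intro h
    have hinj := (MonoidHom.ker_eq_bot_iff f).mp h
    have := Nat.card_congr (Equiv.ofBijective f ⟨hinj, hf⟩)
    rw [hcard] at this
    have := Nat.pow_lt_pow_right hp.one_lt (Nat.lt_succ_self m)
    simp only [Nat.succ_eq_add_one] at this
    omega
  refine ⟨H, hH, QuotientGroup.lift N f (hN f.ker inferInstance hk), ?_, h⟩
  intro x
  obtain ⟨g, rfl⟩ := hf x
  exact ⟨QuotientGroup.mk g, rfl⟩

theorem GT (p : ℕ) (hp : p.Prime) (n : ℕ) : ∀ (G : Type) [Group G] [Finite G]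
    (_ : Nat.card G = p ^ n) (A : Subgroup G) (_ : A.Normal)
    (_ : ∀ a ∈ A, ∀ b ∈ A, a * b = b * a) (_ : A.index = p)
    (_ : ∃ a b : G, a * b ≠ b * a) (_ : PP p n G),
    (Group.nilpotencyClass G = n - 1 ∧ Nat.card (Subgroup.center G) = p) ∨ TypeII p n G := by
  haveI := Fact.mk hp
  induction n with
  | zero =>
    intro G _ _ hcard A _ _ _ hnc _
    rw [pow_zero] at hcard
    obtain ⟨a, b, hab⟩ := hnc
    have := (Nat.card_eq_one_iff_unique.mp hcard).1
    exact absurd (Subsingleton.elim _ _) hab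
  | succ m ih =>
    intro G _ _ hcard A hAn hA hidx hnc hPP
    have hG : IsPGroup p G := IsPGroup.of_card hcard
    have hncy := not_cyclic_of_noncomm hnc
    haveI hnt : Nontrivial G := by
      obtain ⟨a, b, hab⟩ := hnc
      exact ⟨_, _, hab⟩
    have hL2 := card_abelian_eq A hA (hidx ▸ hp) hnc
    have hcA : Nat.card A = p ^ m := by
      have := Subgroup.card_mul_index A
      rw [hidx, hcard, pow_succ] at this
      exact Nat.eq_of_mul_eq_mul_right hp.pos this
    have hcne : commutator G ≠ ⊥ := by
      intro h
      obtain ⟨a, b, hab⟩ := hnc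
      have : a * b * a⁻¹ * b⁻¹ ∈ commutator G := by
        rw [← commutatorElement_def, commutator_def]
        exact Subgroup.commutator_mem_commutator (Subgroup.mem_top _) (Subgroup.mem_top _)
      rw [h, Subgroup.mem_bot, mul_inv_eq_one, mul_inv_eq_iff_eq_mul] at this
      exact hab this
    have hd1 : p ∣ Nat.card (commutator G) := by
      rcases (hG.to_subgroup (commutator G)).card_eq_or_dvd with h | h
      · exact absurd (Subgroup.card_eq_one.mp h) hcne
      · exact h
    have hcn := hG.center_nontrivial
    have hd2 : p ∣ Nat.card (Subgroup.center G) := by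
      rcases (hG.to_subgroup (Subgroup.center G)).card_eq_or_dvd with h | h
      · exact absurd h (Finite.one_lt_card (α := Subgroup.center G)).ne'
      · exact h
    have hm2 : 2 ≤ m := by
      have := mul_dvd_mul hd1 hd2
      rw [← hL2, hcA, ← pow_two] at this
      exact (Nat.pow_dvd_pow_iff_le_right hp.one_lt).mp this
    -- the center is cyclic
    have hcc : IsCyclic (Subgroup.center G) := by
      obtain ⟨H, hH, f, hf, h | h⟩ := hPP m (by omega)
      · exfalso
        obtain ⟨hH1, hH2⟩ := h
        have hk : Nat.card f.ker = p := by
          have := Subgroup.card_mul_index f.ker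
          rw [Subgroup.index_ker, MonoidHom.range_eq_top.mpr hf, Subgroup.card_top, hH1, hcard,
            pow_succ'] at this
          exact Nat.eq_of_mul_eq_mul_right (pow_pos hp.pos m) this
        have := central_of_card_prime p _ hp hcard f.ker hk
        obtain ⟨a, b, hab⟩ := hnc
        exact hab ((MonoidHom.isMulCommutative_of_isCyclic_of_ker_le_center f
          this).is_comm.comm a b)
      · obtain ⟨h1, h2, h3⟩ := h
        have hbij : Function.Bijective f := by
          haveI : Finite H := Finite.of_surjective f hf
          exact (Nat.bijective_iff_surjective_and_card f).mpr ⟨hf, by rw [hcard, h1]⟩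
        exact ((Subgroup.centerCongr (MulEquiv.ofBijective f hbij)).isCyclic).mpr h3
    obtain ⟨z, hzc, hz, hzz, hmono⟩ := exists_monolith p _ hp hcard hcc hnt
    have hz1 : z ≠ 1 := by rintro rfl; rw [orderOf_one] at hz; exact hp.one_lt.ne hz
    have hzp : z ^ p = 1 := by rw [← hz]; exact pow_orderOf_eq_one z
    obtain ⟨N, hNz⟩ : ∃ N, N = Subgroup.zpowers z := ⟨_, rfl⟩
    have hNc : N ≤ Subgroup.center G := by rw [hNz]; exact Subgroup.zpowers_le.mpr hzc
    have hNcard : Nat.card N = p := by rw [hNz, Nat.card_zpowers, hz]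
    haveI hNn : N.Normal := ⟨fun a ha g => by
      rw [Subgroup.mem_center_iff.mp (hNc ha) g, mul_inv_cancel_right]; exact ha⟩
    have hNmin : ∀ K : Subgroup G, K.Normal → K ≠ ⊥ → N ≤ K := by
      intro K h1 h2; rw [hNz]; exact Subgroup.zpowers_le.mpr (hmono K h1 h2)
    have hQcard : Nat.card (G ⧸ N) = p ^ m := by
      have := Subgroup.card_mul_index N
      rw [hNcard, hcard, pow_succ'] at this
      exact Nat.eq_of_mul_eq_mul_left hp.pos this
    have hA1 : A ≠ ⊥ := by
      rintro rfl
      rw [Subgroup.card_bot] at hcA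
      have := Nat.one_lt_pow (by omega : m ≠ 0) hp.one_lt
      omega
    have hNA : N ≤ A := hNmin A hAn hA1
    have hNcomm : N ≤ commutator G := hNmin _ inferInstance hcne
    by_cases hQ : ∃ a b : G ⧸ N, a * b ≠ b * a
    · haveI : (A.map (QuotientGroup.mk' N)).Normal :=
        hAn.map _ (QuotientGroup.mk'_surjective N)
      rcases ih (G ⧸ N) hQcard (A.map (QuotientGroup.mk' N)) inferInstance
        (by rintro _ ⟨a, ha, rfl⟩ _ ⟨b, hb, rfl⟩; rw [← map_mul, ← map_mul, hA a ha b hb])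
        (by rw [map_index_eq N A hNA, hidx]) hQ
        (PP_quotient p m hp hcard N hNmin hPP (by omega)) with h | h
      · left
        have hcz := center_card_eq A hA (hidx ▸ hp) N hNA hNcomm hQ
        rw [h.2] at hcz
        refine ⟨?_, hcz⟩
        have hNe : N = Subgroup.center G :=
          Subgroup.eq_of_le_of_card_ge hNc (by rw [hcz, hNcard])
        haveI : Group.IsNilpotent G := hG.isNilpotent
        have h1 := h.1
        subst hNe
        rw [Group.nilpotencyClass_eq_quotient_center_plus_one, h1]
        omega
      · exfalso
        obtain ⟨h4, zb, hzb, hzbo, hcomm, yb, hyb⟩ := h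
        obtain ⟨a, b, hab⟩ := hQ
        exact hab (typeII_contra p m hp h4 hcard hncy z hzc hz hzz (G ⧸ N) (QuotientGroup.mk' N)
          (QuotientGroup.mk'_surjective N) (by rw [QuotientGroup.ker_mk', hNz]) hQcard
          zb hzb hzbo hcomm yb hyb a b)
    · push Not at hQ
      have hcommN : ∀ a b : G, a * b * a⁻¹ * b⁻¹ ∈ N := by
        intro a b
        rw [← QuotientGroup.eq_one_iff]
        have := hQ (a : G ⧸ N) (b : G ⧸ N)
        simp only [QuotientGroup.mk_mul, QuotientGroup.mk_inv]
        rw [this]; group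
      by_cases hm3 : m = 2
      · left
        subst hm3
        have hcz : Nat.card (Subgroup.center G) = p := by
          obtain ⟨c, hc⟩ := hd1
          obtain ⟨d, hd⟩ := hd2
          rw [hcA, hc, hd] at hL2
          have : p ^ 2 * 1 = p ^ 2 * (c * d) := by
            rw [mul_one]; exact hL2.trans (by ring)
          have := Nat.eq_of_mul_eq_mul_left (pow_pos hp.pos 2) this
          have hd1 : d = 1 := Nat.dvd_one.mp ⟨c, by rw [mul_comm]; exact this⟩
          rw [hd, hd1, mul_one]
        refine ⟨?_, hcz⟩
        have hNe : N = Subgroup.center G :=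
          Subgroup.eq_of_le_of_card_ge hNc (by rw [hcz, hNcard])
        haveI : Group.IsNilpotent G := hG.isNilpotent
        have h1 : Group.nilpotencyClass (G ⧸ N) = 1 := by
          haveI : Group.IsNilpotent (G ⧸ N) := inferInstance
          have hle : Group.nilpotencyClass (G ⧸ N) ≤ 1 :=
            Group.IsNilpotent.nilpotencyClass_le_one_iff.mpr ⟨⟨hQ⟩⟩
          have hne : Group.nilpotencyClass (G ⧸ N) ≠ 0 := by
            intro h
            have := Group.nilpotencyClass_zero_iff_subsingleton.mp h
            have : Nat.card (G ⧸ N) = 1 := Nat.card_unique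
            rw [hQcard] at this
            have := Nat.one_lt_pow (by omega : 2 ≠ 0) hp.one_lt
            omega
          omega
        subst hNe
        rw [Group.nilpotencyClass_eq_quotient_center_plus_one, h1]
      · right
        refine ⟨by omega, z, hzc, hz, by rw [← hNz]; exact hcommN, ?_⟩
        obtain ⟨H, hH, f, hf, h | h⟩ := hPP (m - 1) (by omega)
        · obtain ⟨h1, h2⟩ := h
          obtain ⟨g, hg⟩ := h2.exists_generator
          obtain ⟨y, rfl⟩ := hf g
          have hfy : orderOf (f y) = p ^ (m - 1) := by
            rw [orderOf_eq_card_of_forall_mem_zpowers hg, h1]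
          refine ⟨y, ?_⟩
          have hyc : y ^ p ∈ Subgroup.center G := pow_central p y z hzc hzp
            (fun g => by rw [← hNz]; exact hcommN y g)
          have hy1 : y ^ p ≠ 1 := by
            intro h
            have : f y ^ (p ^ 1) = 1 := by rw [pow_one, ← map_pow, h, map_one]
            rw [← orderOf_dvd_iff_pow_eq_one, hfy] at this
            have := (Nat.pow_dvd_pow_iff_le_right hp.one_lt).mp this
            omega
          have hzy : z ∈ Subgroup.zpowers y :=
            (Subgroup.zpowers_le.mpr (Subgroup.npow_mem_zpowers _ _)) (hzz _ hyc hy1)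
          have hker : f.ker ≠ ⊥ := by
            intro h
            have hinj := (MonoidHom.ker_eq_bot_iff f).mp h
            have := Nat.card_congr (Equiv.ofBijective f ⟨hinj, hf⟩)
            rw [hcard, h1] at this
            have := Nat.pow_right_injective hp.two_le this
            omega
          have := order_lift p (m - 1) hp f y z hz1 (hmono f.ker inferInstance hker) hzy hfy
            (by rw [hcard]; congr 1; omega) hncy
          rw [this]; congr 1; omega
        · exfalso
          obtain ⟨h1, ⟨a, b, hab⟩, h3⟩ := h
          obtain ⟨a, rfl⟩ := hf a
          obtain ⟨b, rfl⟩ := hf b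
          have hker : f.ker ≠ ⊥ := by
            intro h
            have hinj := (MonoidHom.ker_eq_bot_iff f).mp h
            have := Nat.card_congr (Equiv.ofBijective f ⟨hinj, hf⟩)
            rw [hcard, h1] at this
            have := Nat.pow_right_injective hp.two_le this
            omega
          have := hNmin f.ker inferInstance hker (hcommN a b)
          rw [MonoidHom.mem_ker] at this
          simp only [map_mul, map_inv] at this
          exact hab (by rw [mul_inv_eq_one, mul_inv_eq_iff_eq_mul] at this; exact this)


theorem nilClass_eq {G : Type} [Group G] [Group.IsNilpotent G] :
    nilClass G = Group.nilpotencyClass G := by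
  have : {n | Subgroup.upperCentralSeries G n = ⊤} = Set.Ici (Group.nilpotencyClass G) := by
    ext n
    exact Subgroup.upperCentralSeries_eq_top_iff_nilpotencyClass_le
  change sInf {n | Subgroup.upperCentralSeries G n = ⊤} = _
  rw [this]
  exact csInf_Ici

theorem exists_zmod_hom {K : Type*} [Group K] (m : ℕ) (k : K) (hk : k ^ m = 1) :
    ∃ f : Multiplicative (ZMod m) →* K, f (Multiplicative.ofAdd 1) = k := by
  let f := AddMonoidHom.toMultiplicativeLeft
    (ZMod.lift m ⟨zmultiplesHom (Additive K) (Additive.ofMul k), by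
      simp only [zmultiplesHom_apply, natCast_zsmul]
      rw [← ofMul_pow, hk, ofMul_one]⟩)
  refine ⟨f, ?_⟩
  change Additive.toMul (ZMod.lift m _ (1 : ZMod m)) = k
  have := ZMod.lift_coe m ⟨zmultiplesHom (Additive K) (Additive.ofMul k), by
      simp only [zmultiplesHom_apply, natCast_zsmul]
      rw [← ofMul_pow, hk, ofMul_one]⟩ 1
  simp only [Int.cast_one] at this
  rw [this]
  simp

theorem zmod_gen (m : ℕ) [NeZero m] (x : Multiplicative (ZMod m)) :
    ∃ i : ℕ, x = (Multiplicative.ofAdd (1 : ZMod m)) ^ i := by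
  refine ⟨(Multiplicative.toAdd x).val, ?_⟩
  rw [← ofAdd_nsmul, nsmul_one, ZMod.natCast_zmod_val, ofAdd_toAdd]

theorem orderOf_zmod_gen (m : ℕ) : orderOf (Multiplicative.ofAdd (1 : ZMod m)) = m := by
  rw [orderOf_ofAdd_eq_addOrderOf, ZMod.addOrderOf_one]

theorem mul_pow_commutator {G : Type} [Group G] (b Y w : G) (hw : ∀ x, w * x = x * w)
    (h : Y * b = w * (b * Y)) (m : ℕ) :
    (b * Y) ^ m = w ^ (m.choose 2) * (b ^ m * Y ^ m) := by
  induction m with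
  | zero => simp
  | succ m ih =>
    have hwk : ∀ (k : ℕ) x, w ^ k * x = x * w ^ k :=
      fun k x => ((show Commute w x from hw x).pow_left k).eq
    have h1 := pow_commutator Y b w hw h m
    calc (b * Y) ^ (m + 1) = w ^ (m.choose 2) * (b ^ m * Y ^ m) * (b * Y) := by
          rw [pow_succ, ih]
      _ = w ^ (m.choose 2) * b ^ m * (Y ^ m * b) * Y := by group
      _ = w ^ (m.choose 2) * (b ^ m * w ^ m) * b * Y ^ m * Y := by rw [h1]; group
      _ = w ^ (m.choose 2) * w ^ m * b ^ m * b * Y ^ m * Y := by rw [← hwk]; group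
      _ = w ^ ((m + 1).choose 2) * (b ^ (m + 1) * Y ^ (m + 1)) := by
          rw [Nat.choose_succ_succ' m 1, Nat.choose_one_right, add_comm, pow_add, pow_succ b,
            pow_succ Y]; group

/-- the power automorphism `x ↦ x^(1+p^(n-2))` and its semidirect action. -/
theorem exists_phi (p n : ℕ) (hp : p.Prime) (hn : 4 ≤ n) :
    ∃ φ : Multiplicative (ZMod p) →* MulAut (Multiplicative (ZMod (p ^ (n - 1)))),
      (∀ x, φ (Multiplicative.ofAdd (1 : ZMod p)) x = x ^ (1 + p ^ (n - 2))) := by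
  have hc : (Nat.card (Multiplicative (ZMod (p ^ (n - 1))))).Coprime (1 + p ^ (n - 2)) := by
    have : Nat.card (Multiplicative (ZMod (p ^ (n - 1)))) = p ^ (n - 1) := by
      change Nat.card (ZMod _) = _
      exact Nat.card_zmod _
    rw [this]
    apply Nat.Coprime.pow_left
    rw [hp.coprime_iff_not_dvd]
    intro h
    have h2 : p ∣ p ^ (n - 2) := dvd_pow_self p (by omega)
    have := (Nat.dvd_add_left h2).mp h
    exact hp.one_lt.ne' (Nat.dvd_one.mp this)
  let α : MulAut (Multiplicative (ZMod (p ^ (n - 1)))) :=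
    MulEquiv.ofBijective (powMonoidHom (1 + p ^ (n - 2))) (powCoprime hc).bijective
  have hα : ∀ x, α x = x ^ (1 + p ^ (n - 2)) := fun x => rfl
  have hαk : ∀ (k : ℕ) x, (α ^ k) x = x ^ ((1 + p ^ (n - 2)) ^ k) := by
    intro k
    induction k with
    | zero => intro x; simp
    | succ k ih =>
      intro x
      rw [pow_succ', MulAut.mul_apply, ih, hα, ← pow_mul, pow_succ]
  have hαp : α ^ p = 1 := by
    ext x
    rw [hαk, MulAut.one_apply]
    obtain ⟨t, ht⟩ := one_add_pow_expand ((p : ℤ) ^ (n - 2)) p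
    have h1 : (p : ℤ) ^ (n - 1) ∣ (1 + (p : ℤ) ^ (n - 2)) ^ p - 1 := by
      rw [ht]
      have e : 1 + (p : ℤ) * p ^ (n - 2) + (p ^ (n - 2)) ^ 2 * t - 1
        = p ^ (n - 2 + 1) + p ^ ((n - 2) * 2) * t := by
        rw [pow_succ, pow_mul]; ring
      rw [e]
      apply dvd_add
      · exact pow_dvd_pow _ (by omega)
      · exact (pow_dvd_pow _ (by omega)).mul_right _
    have h2 : x ^ ((1 + (p : ℤ) ^ (n - 2)) ^ p - 1) = 1 := by
      rw [← orderOf_dvd_iff_zpow_eq_one]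
      refine dvd_trans ?_ h1
      have : orderOf x ∣ p ^ (n - 1) := by
        have := orderOf_dvd_natCard x
        rwa [show Nat.card (Multiplicative (ZMod (p ^ (n - 1)))) = p ^ (n - 1) from
          Nat.card_zmod _] at this
      exact_mod_cast this
    rw [zpow_sub, zpow_one, mul_inv_eq_one] at h2
    rw [← zpow_natCast]
    push_cast
    exact h2
  obtain ⟨φ, hφ⟩ := exists_zmod_hom p α hαp
  exact ⟨φ, fun x => by rw [hφ, hα]⟩

theorem iso_of_elements {G : Type} [Group G] [Finite G] (p n : ℕ) (hp : p.Prime) (hn : 2 ≤ n)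
    (hcard : Nat.card G = p ^ n) (y β : G) (hy : orderOf y = p ^ (n - 1)) (hβ : β ^ p = 1)
    (hβy : β ∉ Subgroup.zpowers y) (r : ℕ) (hc : β * y * β⁻¹ = y ^ r)
    (φ : Multiplicative (ZMod p) →* MulAut (Multiplicative (ZMod (p ^ (n - 1)))))
    (hφ : ∀ x, φ (Multiplicative.ofAdd (1 : ZMod p)) x = x ^ r) :
    Nonempty (G ≃* Multiplicative (ZMod (p ^ (n - 1))) ⋊[φ] Multiplicative (ZMod p)) := by
  haveI : NeZero p := ⟨hp.ne_zero⟩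
  haveI : NeZero (p ^ (n - 1)) := ⟨pow_ne_zero _ hp.ne_zero⟩
  obtain ⟨f1, hf1⟩ := exists_zmod_hom (p ^ (n - 1)) y (by rw [← hy]; exact pow_orderOf_eq_one y)
  obtain ⟨f2, hf2⟩ := exists_zmod_hom p β hβ
  have h0 : ∀ x, f1 (φ (Multiplicative.ofAdd 1) x) = β * f1 x * β⁻¹ := by
    intro x
    obtain ⟨i, rfl⟩ := zmod_gen _ x
    rw [hφ, map_pow, map_pow, hf1, ← conj_pow, hc, ← pow_mul, ← pow_mul, mul_comm]
  have h1 : ∀ (i : ℕ) x, f1 (φ ((Multiplicative.ofAdd 1) ^ i) x) = β ^ i * f1 x * (β ^ i)⁻¹ := by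
    intro i
    induction i with
    | zero => intro x; simp
    | succ i ih =>
      intro x
      rw [pow_succ', map_mul, MulAut.mul_apply, h0, ih, pow_succ']
      group
  let F := SemidirectProduct.lift (φ := φ) f1 f2 (by
    intro g
    obtain ⟨i, rfl⟩ := zmod_gen _ g
    refine MonoidHom.ext fun x => ?_
    change f1 (φ _ x) = f2 _ * f1 x * (f2 _)⁻¹
    rw [h1, map_pow, hf2])
  have hyF : y ∈ F.range := ⟨SemidirectProduct.inl (Multiplicative.ofAdd 1), by
    rw [SemidirectProduct.lift_inl, hf1]⟩
  have hβF : β ∈ F.range := ⟨SemidirectProduct.inr (Multiplicative.ofAdd 1), by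
    rw [SemidirectProduct.lift_inr, hf2]⟩
  have hidx : (Subgroup.zpowers y).index = p := by
    have := Subgroup.card_mul_index (Subgroup.zpowers y)
    rw [Nat.card_zpowers, hy, hcard, show n = n - 1 + 1 by omega, pow_succ,
      Nat.add_sub_cancel] at this
    exact Nat.eq_of_mul_eq_mul_left (pow_pos hp.pos _) this
  have hsurj : Function.Surjective F := by
    rw [← MonoidHom.range_eq_top]
    rcases eq_or_top_of_prime_index _ F.range (hidx ▸ hp) (Subgroup.zpowers_le.mpr hyF) with h | h
    · rw [h] at hβF; exact absurd hβF hβy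
    · exact h
  have hcS : Nat.card (Multiplicative (ZMod (p ^ (n - 1))) ⋊[φ] Multiplicative (ZMod p))
      = p ^ n := by
    rw [Nat.card_congr SemidirectProduct.equivProd, Nat.card_prod]
    change Nat.card (ZMod _) * Nat.card (ZMod _) = _
    rw [Nat.card_zmod, Nat.card_zmod, ← pow_succ]
    congr 1; omega
  haveI : Finite (Multiplicative (ZMod (p ^ (n - 1))) ⋊[φ] Multiplicative (ZMod p)) :=
    Nat.finite_of_card_ne_zero (by rw [hcS]; exact pow_ne_zero _ hp.ne_zero)
  have hbij : Function.Bijective F :=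
    (Nat.bijective_iff_surjective_and_card F).mpr ⟨hsurj, by rw [hcS, hcard]⟩
  exact ⟨(MulEquiv.ofBijective F hbij).symm⟩

theorem iso_prod_of_elements {G : Type} [Group G] [Finite G] (p n : ℕ) (hp : p.Prime) (hn : 2 ≤ n)
    (hcard : Nat.card G = p ^ n) (y β : G) (hy : orderOf y = p ^ (n - 1)) (hβ : β ^ p = 1)
    (hβy : β ∉ Subgroup.zpowers y) (hc : ∀ a b : G, a * b = b * a) :
    Nonempty (G ≃* Multiplicative (ZMod (p ^ (n - 1))) × Multiplicative (ZMod p)) := by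
  haveI : NeZero p := ⟨hp.ne_zero⟩
  haveI : NeZero (p ^ (n - 1)) := ⟨pow_ne_zero _ hp.ne_zero⟩
  obtain ⟨f1, hf1⟩ := exists_zmod_hom (p ^ (n - 1)) y (by rw [← hy]; exact pow_orderOf_eq_one y)
  obtain ⟨f2, hf2⟩ := exists_zmod_hom p β hβ
  let F := MonoidHom.noncommCoprod f1 f2 (fun a b => hc _ _)
  have hF : ∀ a b, F (a, b) = f1 a * f2 b := fun a b => rfl
  have hyF : y ∈ F.range := ⟨(Multiplicative.ofAdd 1, 1), by
    rw [hF, hf1, map_one, mul_one]⟩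
  have hβF : β ∈ F.range := ⟨(1, Multiplicative.ofAdd 1), by
    rw [hF, hf2, map_one, one_mul]⟩
  have hidx : (Subgroup.zpowers y).index = p := by
    have := Subgroup.card_mul_index (Subgroup.zpowers y)
    rw [Nat.card_zpowers, hy, hcard, show n = n - 1 + 1 by omega, pow_succ,
      Nat.add_sub_cancel] at this
    exact Nat.eq_of_mul_eq_mul_left (pow_pos hp.pos _) this
  have hsurj : Function.Surjective F := by
    rw [← MonoidHom.range_eq_top]
    rcases eq_or_top_of_prime_index _ F.range (hidx ▸ hp) (Subgroup.zpowers_le.mpr hyF) with h | h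
    · rw [h] at hβF; exact absurd hβF hβy
    · exact h
  have hcS : Nat.card (Multiplicative (ZMod (p ^ (n - 1))) × Multiplicative (ZMod p))
      = p ^ n := by
    rw [Nat.card_prod]
    change Nat.card (ZMod _) * Nat.card (ZMod _) = _
    rw [Nat.card_zmod, Nat.card_zmod, ← pow_succ]
    congr 1; omega
  haveI : Finite (Multiplicative (ZMod (p ^ (n - 1))) × Multiplicative (ZMod p)) :=
    Nat.finite_of_card_ne_zero (by rw [hcS]; exact pow_ne_zero _ hp.ne_zero)
  have hbij : Function.Bijective F :=
    (Nat.bijective_iff_surjective_and_card F).mpr ⟨hsurj, by rw [hcS, hcard]⟩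
  exact ⟨(MulEquiv.ofBijective F hbij).symm⟩

theorem exists_fix (p l : ℤ) (e : ℤ) (k : ℕ) : ∃ j : ℤ, p ^ k ∣ l + j * (1 - p * e) := by
  have h : IsCoprime (1 - p * e) (p ^ k) := by
    apply IsCoprime.pow_right
    exact ⟨1, e, by ring⟩
  obtain ⟨u, v, huv⟩ := h
  refine ⟨-l * u, l * v, ?_⟩
  linear_combination l * (1 - huv) - l + l * huv * 0

theorem typeII_iso {G : Type} [Group G] [Finite G] (p n : ℕ) (hp : p.Prime)
    (hcard : Nat.card G = p ^ n) (hnc : ∃ a b : G, a * b ≠ b * a) (hT : TypeII p n G) :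
    4 ≤ n ∧ nilClass G = 2 ∧
      ∃ φ : Multiplicative (ZMod p) →* MulAut (Multiplicative (ZMod (p ^ (n - 1)))),
        (∀ x, φ (Multiplicative.ofAdd (1 : ZMod p)) x = x ^ (1 + p ^ (n - 2))) ∧
        Nonempty (G ≃* Multiplicative (ZMod (p ^ (n - 1))) ⋊[φ] Multiplicative (ZMod p)) := by
  haveI := Fact.mk hp
  have hG : IsPGroup p G := IsPGroup.of_card hcard
  haveI : Group.IsNilpotent G := hG.isNilpotent
  obtain ⟨hn, z, hzc, hz, hcomm, y, hy⟩ := hT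
  have hzp : z ^ p = 1 := by rw [← hz]; exact pow_orderOf_eq_one z
  have hcz : Subgroup.zpowers z ≤ Subgroup.center G := Subgroup.zpowers_le.mpr hzc
  refine ⟨hn, ?_, ?_⟩
  · rw [nilClass_eq]
    have h1 : ¬ Group.nilpotencyClass G ≤ 1 := by
      intro h
      obtain ⟨a, b, hab⟩ := hnc
      exact hab ((Group.IsNilpotent.nilpotencyClass_le_one_iff.mp h).is_comm.comm a b)
    have h2 : Group.nilpotencyClass (G ⧸ Subgroup.center G) ≤ 1 := by
      apply Group.IsNilpotent.nilpotencyClass_le_one_iff.mpr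
      refine ⟨⟨?_⟩⟩
      intro a b
      obtain ⟨a, rfl⟩ := QuotientGroup.mk'_surjective _ a
      obtain ⟨b, rfl⟩ := QuotientGroup.mk'_surjective _ b
      rw [← map_mul, ← map_mul]
      rw [← mul_inv_eq_one, ← map_inv, ← map_mul, QuotientGroup.mk'_apply,
            QuotientGroup.eq_one_iff]
      have e : a * b * (b * a)⁻¹ = a * b * a⁻¹ * b⁻¹ := by group
      rw [e]
      exact hcz (hcomm a b)
    rw [Group.nilpotencyClass_quotient_center] at h2
    omega
  have hidx : (Subgroup.zpowers y).index = p := by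
    have := Subgroup.card_mul_index (Subgroup.zpowers y)
    rw [Nat.card_zpowers, hy, hcard, show n = n - 1 + 1 by omega, pow_succ,
      Nat.add_sub_cancel] at this
    exact Nat.eq_of_mul_eq_mul_left (pow_pos hp.pos _) this
  have hnorm := normal_of_index_prime p n hp (by omega) hcard _ hidx
  -- an element not commuting with y
  obtain ⟨b, hb⟩ : ∃ b, b * y ≠ y * b := by
    by_contra h
    push Not at h
    obtain ⟨a, b, hab⟩ := hnc
    exact hab (comm_of_central_index (Subgroup.zpowers y)
      (Subgroup.zpowers_le.mpr (Subgroup.mem_center_iff.mpr h)) (hidx ▸ hp) a b)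
  obtain ⟨w, hw⟩ : ∃ w, w = b * y * b⁻¹ * y⁻¹ := ⟨_, rfl⟩
  have hwc : w ∈ Subgroup.center G := by rw [hw]; exact hcz (hcomm b y)
  have hwcomm : ∀ x, w * x = x * w := fun x => (Subgroup.mem_center_iff.mp hwc x).symm
  have hw1 : w ≠ 1 := by
    rw [hw]; intro h
    rw [mul_inv_eq_one, mul_inv_eq_iff_eq_mul] at h
    exact hb h
  have hwp : orderOf w = p := by
    apply orderOf_eq_prime _ hw1
    obtain ⟨i, hi⟩ := hcomm b y
    change z ^ i = _ at hi
    rw [hw, ← hi, ← zpow_natCast, ← zpow_mul, mul_comm, zpow_mul, zpow_natCast, hzp, one_zpow]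
  have hwy : w ∈ Subgroup.zpowers y := by
    rw [hw]
    exact (Subgroup.zpowers y).mul_mem (hnorm.conj_mem y (Subgroup.mem_zpowers y) b)
      ((Subgroup.zpowers y).inv_mem (Subgroup.mem_zpowers y))
  obtain ⟨q, hq⟩ : ∃ q, q = y ^ (p ^ (n - 2)) := ⟨_, rfl⟩
  have hqp : orderOf q = p := by
    rw [hq, orderOf_pow_of_dvd (pow_ne_zero _ hp.ne_zero)
      (by rw [hy]; exact pow_dvd_pow _ (by omega)), hy, Nat.pow_div (by omega) hp.pos]
    rw [show n - 1 - (n - 2) = 1 by omega, pow_one]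
  obtain ⟨c, hc⟩ : ∃ c : ℕ, w ^ c = q := by
    have := mem_zpowers_of_orderOf_dvd (C := Subgroup.zpowers y)
      ⟨q, by rw [hq]; exact Subgroup.npow_mem_zpowers _ _⟩ ⟨w, hwy⟩
      (by rw [← Subgroup.orderOf_coe, ← Subgroup.orderOf_coe]; simp only [hqp, hwp, dvd_refl])
    rw [← mem_powers_iff_mem_zpowers] at this
    obtain ⟨c, hc⟩ := this
    exact ⟨c, by simpa using congrArg Subtype.val hc⟩
  have hqc : ∀ x, q * x = x * q := by
    intro x; rw [← hc]; exact ((show Commute w x from hwcomm x).pow_left c).eq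
  obtain ⟨d, hd⟩ : ∃ d, d = b ^ c := ⟨_, rfl⟩
  have hdy : d * y = q * (y * d) := by
    rw [hd, ← hc]
    exact pow_commutator b y w hwcomm (by rw [hw]; group) c
  have hdconj : d * y * d⁻¹ = y * q := by rw [hdy, ← hqc y]; group
  have hdk : ∀ k : ℤ, d * y ^ k * d⁻¹ = y ^ k * q ^ k := by
    intro k
    rw [← conj_zpow, hdconj, (show Commute y q from (hqc y).symm).mul_zpow]
  have hdp : d ^ p ∈ Subgroup.zpowers y := by
    rw [← hidx]; exact Subgroup.pow_index_mem _ d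
  obtain ⟨k, hk⟩ := hdp
  change y ^ k = _ at hk
  have hqk : q ^ k = 1 := by
    have := hdk k
    rw [hk] at this
    have h2 : d * d ^ p * d⁻¹ = d ^ p := by rw [← pow_succ', pow_succ]; group
    rw [h2] at this
    exact (mul_eq_left (a := d ^ p)).mp this.symm
  rw [← orderOf_dvd_iff_zpow_eq_one, hqp] at hqk
  obtain ⟨l, hl⟩ := hqk
  obtain ⟨j, hj⟩ := exists_fix p l ((p : ℤ) ^ (n - 4) * (p.choose 2 : ℕ)) (n - 2)
  have hβp : (d * y ^ j) ^ p = 1 := by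
    have e1 : y ^ j * d = q ^ (-j) * (d * y ^ j) := by
      have := hdk j
      rw [mul_inv_eq_iff_eq_mul] at this
      rw [this]
      have h3 : ∀ x, q ^ j * x = x * q ^ j :=
        fun x => ((show Commute q x from hqc x).zpow_left j).eq
      rw [← h3, mul_assoc (q ^ j), ← mul_assoc (q ^ (-j)), ← zpow_add, neg_add_cancel, zpow_zero,
        one_mul]
    rw [mul_pow_commutator d (y ^ j) (q ^ (-j))
      (fun x => ((show Commute q x from hqc x).zpow_left (-j)).eq) e1 p, ← hk, hq]
    rw [← zpow_natCast, ← zpow_natCast, ← zpow_natCast, ← zpow_mul, ← zpow_mul, ← zpow_mul,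
      ← zpow_add, ← zpow_add, ← orderOf_dvd_iff_zpow_eq_one, hy, hl]
    obtain ⟨t, ht⟩ := hj
    refine ⟨t, ?_⟩
    push_cast
    obtain ⟨n', rfl⟩ : ∃ n', n = n' + 4 := ⟨n - 4, by omega⟩
    simp only [Nat.add_sub_cancel, show n' + 4 - 2 = n' + 2 by omega,
      show n' + 4 - 1 = n' + 3 by omega] at ht ⊢
    linear_combination (p : ℤ) * ht
  have hβconj : (d * y ^ j) * y * (d * y ^ j)⁻¹ = y ^ (1 + p ^ (n - 2)) := by
    calc (d * y ^ j) * y * (d * y ^ j)⁻¹ = d * y * d⁻¹ := by group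
      _ = _ := by rw [hdconj, hq, pow_add, pow_one]
  have hβy : d * y ^ j ∉ Subgroup.zpowers y := by
    rintro ⟨i, hi⟩
    change y ^ i = _ at hi
    rw [← hi] at hβconj
    have : y ^ (1 + p ^ (n - 2)) = y := by rw [← hβconj]; group
    rw [pow_add, pow_one, mul_eq_left, ← hq] at this
    rw [this, orderOf_one] at hqp
    exact hp.one_lt.ne hqp
  obtain ⟨φ, hφ⟩ := exists_phi p n hp hn
  exact ⟨φ, hφ, iso_of_elements p n hp (by omega) hcard y _ hy hβp hβy _ hβconj φ hφ⟩


theorem exists_unit_order (m : ℕ) (hm : m ≠ 0) : ∃ u : ℂˣ, orderOf u = m := by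
  have h := Complex.isPrimitiveRoot_exp m hm
  refine ⟨(h.isUnit hm).unit, ?_⟩
  rw [← orderOf_units, IsUnit.unit_spec]
  exact h.eq_orderOf.symm

/-- A cyclic quotient of order `m` yields the codegree `m`. -/
theorem mem_codSet_of_cyclic {G H : Type} [Group G] [Group H] [Finite H] (f : G →* H)
    (hf : Function.Surjective f) (hH : IsCyclic H) : Nat.card H ∈ codSet G := by
  obtain ⟨u, hu⟩ := exists_unit_order (Nat.card H) Nat.card_pos.ne'
  obtain ⟨x, hx⟩ := exists_zmod_hom (Nat.card H) u (by rw [← hu]; exact pow_orderOf_eq_one u)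
  haveI : NeZero (Nat.card H) := ⟨Nat.card_pos.ne'⟩
  have hinj : Function.Injective x := by
    rw [injective_iff_map_eq_one]
    intro a ha
    obtain ⟨i, rfl⟩ := zmod_gen _ a
    rw [map_pow, hx, ← orderOf_dvd_iff_pow_eq_one, hu] at ha
    rw [← orderOf_dvd_iff_pow_eq_one, orderOf_zmod_gen]; exact ha
  let e := (zmodCyclicMulEquiv hH).symm
  obtain ⟨V, hV, hd, hk⟩ := exists_linear ((x.comp e.toMonoidHom).comp f)
  refine ⟨V, hV, ?_⟩
  have hker : ((x.comp e.toMonoidHom).comp f).ker = f.ker := by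
    ext g
    rw [MonoidHom.mem_ker, MonoidHom.mem_ker]
    constructor
    · intro h
      apply e.injective
      apply hinj
      rw [map_one, map_one]; exact h
    · intro h
      rw [MonoidHom.comp_apply, h, map_one]
  rw [codegree, hd, hk, hker, Nat.div_one, Subgroup.index_ker, MonoidHom.range_eq_top.mpr hf,
    Subgroup.card_top]

theorem case_one_iso {G : Type} [Group G] [Finite G] (p n : ℕ) (hp : p.Prime) (hn : 2 ≤ n)
    (hcard : Nat.card G = p ^ n) (K : Subgroup G) [K.Normal] (hK : Nat.card K = p)
    (hcy : IsCyclic (G ⧸ K)) (hnc : ¬ IsCyclic G) :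
    Nonempty (G ≃* Multiplicative (ZMod (p ^ (n - 1))) × Multiplicative (ZMod p)) := by
  haveI := Fact.mk hp
  have hKc := central_of_card_prime p n hp hcard K hK
  have hcomm : ∀ a b : G, a * b = b * a := fun a b =>
    (MonoidHom.isMulCommutative_of_isCyclic_of_ker_le_center (QuotientGroup.mk' K)
      (by rw [QuotientGroup.ker_mk']; exact hKc)).is_comm.comm a b
  have hQ : Nat.card (G ⧸ K) = p ^ (n - 1) := by
    have := Subgroup.card_mul_index K
    rw [hK, hcard, show p ^ n = p * p ^ (n - 1) by rw [← pow_succ']; congr 1; omega] at this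
    exact Nat.eq_of_mul_eq_mul_left hp.pos this
  obtain ⟨g, hg⟩ := hcy.exists_generator
  obtain ⟨y, rfl⟩ := QuotientGroup.mk'_surjective K g
  have hfy : orderOf (QuotientGroup.mk' K y) = p ^ (n - 1) := by
    rw [orderOf_eq_card_of_forall_mem_zpowers hg, hQ]
  have hy : orderOf y = p ^ (n - 1) := by
    obtain ⟨k, hk, hky⟩ := (Nat.dvd_prime_pow hp).mp (hcard ▸ orderOf_dvd_natCard y)
    have h1 : n - 1 ≤ k := by
      have := orderOf_map_dvd (QuotientGroup.mk' K) y
      rw [hfy, hky] at this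
      exact (Nat.pow_dvd_pow_iff_le_right hp.one_lt).mp this
    have h2 : k ≠ n := by
      rintro rfl
      exact hnc (isCyclic_of_orderOf_eq_card y (by rw [hky, hcard]))
    rw [hky]; congr 1; omega
  obtain ⟨β, hβ⟩ := exists_prime_orderOf_dvd_card' (G := K) p (by rw [hK])
  have hβ' : orderOf (β : G) = p := by rw [Subgroup.orderOf_coe, hβ]
  refine iso_prod_of_elements p n hp hn hcard y β hy
    (by rw [← hβ']; exact pow_orderOf_eq_one _) ?_ hcomm
  rintro ⟨i, hi⟩
  change y ^ i = _ at hi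
  have h1 : (QuotientGroup.mk' K y) ^ i = 1 := by
    rw [← map_zpow, hi, QuotientGroup.mk'_apply, QuotientGroup.eq_one_iff]; exact β.2
  rw [← orderOf_dvd_iff_zpow_eq_one, hfy, ← hy, orderOf_dvd_iff_zpow_eq_one, hi] at h1
  rw [h1, orderOf_one] at hβ'
  exact hp.one_lt.ne hβ'

theorem index_pow {G : Type} [Group G] [Finite G] (p n : ℕ) (hp : p.Prime)
    (hcard : Nat.card G = p ^ n) (K : Subgroup G) : ∃ k ≤ n, K.index = p ^ k := by
  have := K.index_dvd_card
  rw [hcard] at this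
  exact (Nat.dvd_prime_pow hp).mp this

theorem one_mem_cdSet {G : Type} [Group G] : 1 ∈ cdSet G := by
  obtain ⟨V, hV, hd, -⟩ := exists_linear (1 : G →* ℂˣ)
  exact ⟨V, hV, hd⟩

theorem noncomm_of_degree {G : Type} [Group G] (V : FDRep ℂ G) (h : Irr V)
    (hd : repDegree V ≠ 1) : ∃ a b : G ⧸ repKer V, a * b ≠ b * a := by
  by_contra hc
  push Not at hc
  apply hd
  apply degree_one_of_comm V h
  intro a b
  rw [← QuotientGroup.eq_one_iff]
  have := hc (a : G ⧸ repKer V) (b : G ⧸ repKer V)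
  simp only [QuotientGroup.mk_mul, QuotientGroup.mk_inv]
  rw [this]; group

theorem forward (p n : ℕ) (hp : p.Prime) (G : Type) [Group G] [Finite G]
    (hcard : Nat.card G = p ^ n) (hn : 2 ≤ n)
    (hcod : codSet G = {m | ∃ i ≤ n - 1, m = p ^ i}) :
      (Nonempty (G ≃* Multiplicative (ZMod (p ^ (n - 1))) × Multiplicative (ZMod p)) ∨
        (4 ≤ n ∧ nilClass G = 2 ∧
          ∃ φ : Multiplicative (ZMod p) →* MulAut (Multiplicative (ZMod (p ^ (n - 1)))),
            (∀ x, φ (Multiplicative.ofAdd (1 : ZMod p)) x = x ^ (1 + p ^ (n - 2))) ∧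
            Nonempty (G ≃* Multiplicative (ZMod (p ^ (n - 1))) ⋊[φ] Multiplicative (ZMod p))) ∨
        (nilClass G = n - 1 ∧ (cdSet G).ncard = 2)) := by
  haveI := Fact.mk hp
  have hG : IsPGroup p G := IsPGroup.of_card hcard
  haveI : Group.IsNilpotent G := hG.isNilpotent
  have hncy : ¬ IsCyclic G := by
    intro h
    have := mem_codSet_of_cyclic (MonoidHom.id G) Function.surjective_id h
    rw [hcod, hcard] at this
    obtain ⟨i, hi, he⟩ := this
    have := Nat.pow_right_injective hp.two_le he
    omega
  obtain ⟨V, hV, hVc⟩ : p ^ (n - 1) ∈ codSet G := by rw [hcod]; exact ⟨n - 1, le_rfl, rfl⟩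
  obtain ⟨k, hk, hki⟩ := index_pow p n hp hcard (repKer V)
  have hVi := irr_of_simple V hV
  have hdp := degree_pos V hVi
  rw [codegree, hki] at hVc
  have hk1 : n - 1 ≤ k := by
    have : p ^ (n - 1) ≤ p ^ k := hVc ▸ Nat.div_le_self _ _
    exact (Nat.pow_le_pow_iff_right hp.one_lt).mp this
  have hkc : Nat.card (repKer V) * p ^ k = p ^ n := by
    rw [← hki, ← hcard]; exact Subgroup.card_mul_index _
  rcases (show k = n - 1 ∨ k = n by omega) with rfl | rfl
  · left
    have hd1 : repDegree V = 1 := by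
      rcases Nat.div_eq_self.mp hVc with h | h
      · exact absurd h (pow_ne_zero _ hp.ne_zero)
      · exact h
    have hcy := cyclic_of_degree_one V hd1 (repKer V) rfl
    refine case_one_iso p n hp hn hcard (repKer V) ?_ hcy hncy
    rw [show p ^ n = p * p ^ (n - 1) by rw [← pow_succ']; congr 1; omega] at hkc
    exact Nat.eq_of_mul_eq_mul_right (pow_pos hp.pos _) hkc
  · right
    have hd : repDegree V = p := by
      have hpk : p ^ k = p ^ (k - 1) * p := by rw [← pow_succ]; congr 1; omega
      have hple : p ≤ p ^ (k - 1) := Nat.le_self_pow (by omega) p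
      generalize repDegree V = d at *
      generalize p ^ (k - 1) = x at *
      rw [hpk] at hVc
      have hx : 0 < x := lt_of_lt_of_le hp.pos hple
      have h1 : x * d ≤ x * p := by
        have := Nat.div_mul_le_self (x * p) d
        rwa [hVc] at this
      have h2 : d ≤ p := Nat.le_of_mul_le_mul_left h1 hx
      have h3 : x * p < (x + 1) * d := by
        rw [Nat.div_eq_iff hdp] at hVc
        have := hVc.2
        have h4 : (x + 1) * d = x * d + d := by ring
        omega
      by_contra hne
      have h5 : d + 1 ≤ p := by omega
      have : (x + 1) * d + (x + 1) ≤ (x + 1) * p := by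
        calc (x + 1) * d + (x + 1) = (x + 1) * (d + 1) := by ring
          _ ≤ _ := Nat.mul_le_mul_left _ h5
      have h6 : (x + 1) * p = x * p + p := by ring
      omega
    have hker : repKer V = ⊥ := by
      rw [← Subgroup.card_eq_one]
      exact Nat.eq_of_mul_eq_mul_right (pow_pos hp.pos k) (by rw [hkc, one_mul])
    obtain ⟨A, hAn, hA, hAi⟩ := exists_abelian_index p k hp hcard V hVi hd hker
    have hdeg : ∀ W : FDRep ℂ G, Simple W → repDegree W = 1 ∨ repDegree W = p := by
      intro W hW
      have := degree_one_or_prime W (irr_of_simple W hW) A hA (hAi ▸ hp)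
      rwa [hAi] at this
    have hnc : ∃ a b : G, a * b ≠ b * a := by
      obtain ⟨a, b, hab⟩ := noncomm_of_degree V hVi (by rw [hd]; exact hp.one_lt.ne')
      obtain ⟨a, rfl⟩ := QuotientGroup.mk'_surjective _ a
      obtain ⟨b, rfl⟩ := QuotientGroup.mk'_surjective _ b
      exact ⟨a, b, fun h => hab (by rw [← map_mul, ← map_mul, h])⟩
    have hPP : PP p k G := by
      intro i hi
      obtain ⟨W, hW, hWc⟩ : p ^ i ∈ codSet G := by rw [hcod]; exact ⟨i, hi, rfl⟩
      have hWi := irr_of_simple W hW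
      refine ⟨G ⧸ repKer W, inferInstance, QuotientGroup.mk' _, QuotientGroup.mk'_surjective _, ?_⟩
      have hci : Nat.card (G ⧸ repKer W) = (repKer W).index := rfl
      rcases hdeg W hW with h | h
      · left
        rw [codegree, h, Nat.div_one] at hWc
        exact ⟨by rw [hci, hWc], cyclic_of_degree_one W h _ rfl⟩
      · right
        refine ⟨?_, noncomm_of_degree W hWi (by rw [h]; exact hp.one_lt.ne'), center_cyclic W hWi⟩
        obtain ⟨j, hj, hji⟩ := index_pow p k hp hcard (repKer W)
        rw [codegree, h, hji] at hWc
        cases j with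
        | zero =>
          rw [pow_zero, Nat.div_eq_of_lt hp.one_lt] at hWc
          exact absurd hWc.symm (pow_ne_zero _ hp.ne_zero)
        | succ j =>
          rw [pow_succ, Nat.mul_div_cancel _ hp.pos] at hWc
          rw [hci, hji, pow_succ, hWc, pow_succ]
    rcases GT p hp k G hcard A hAn hA hAi hnc hPP with h | h
    · right
      refine ⟨by rw [nilClass_eq, h.1], ?_⟩
      have : cdSet G = {1, p} := by
        ext m
        constructor
        · rintro ⟨W, hW, rfl⟩
          exact hdeg W hW
        · rintro (rfl | rfl)
          · exact one_mem_cdSet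
          · exact ⟨V, hV, hd⟩
      rw [this, Set.ncard_pair hp.one_lt.ne]
    · left
      exact typeII_iso p k hp hcard hnc h


theorem exists_pullback_hom {G H : Type} [Group G] [Group H] (f : G →* H)
    (hf : Function.Surjective f) (V : FDRep ℂ H)
    (h : Simple V) : ∃ V' : FDRep ℂ G, Simple V' ∧ repDegree V' = repDegree V ∧
      repKer V' = (repKer V).comap f := by
  have hV := irr_of_simple V h
  let σ : Representation ℂ G V := MonoidHom.comp V.ρ f
  refine ⟨FDRep.of σ, simple_of_irr _ ⟨hV.1, ?_⟩, rfl, ?_⟩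
  · intro W hW
    apply hV.2 W
    intro g w hw
    obtain ⟨g, rfl⟩ := hf g
    exact hW g w hw
  · ext g
    rw [Subgroup.mem_comap, mem_repKer, mem_repKer]
    rfl

theorem cyclic_of_faithful {G : Type} [Group G] [Finite G] (V : FDRep ℂ G)
    (hd : repDegree V = 1) (hk : repKer V = ⊥) : IsCyclic G := by
  have h := cyclic_of_degree_one V hd ⊥ hk.symm
  exact isCyclic_of_injective (QuotientGroup.mk' (⊥ : Subgroup G))
    ((MonoidHom.ker_eq_bot_iff _).mp (QuotientGroup.ker_mk' _))

theorem exists_faithful {H : Type} [Group H] [Finite H] (p k : ℕ) (hp : p.Prime)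
    (hcard : Nat.card H = p ^ k) (hnc : ∃ a b : H, a * b ≠ b * a)
    (hc : IsCyclic (Subgroup.center H)) :
    ∃ V : FDRep ℂ H, Simple V ∧ repKer V = ⊥ ∧ repDegree V ≠ 1 := by
  obtain ⟨z, -, hz, -, hmono⟩ := exists_monolith p k hp hcard hc
    (by obtain ⟨a, b, hab⟩ := hnc; exact ⟨_, _, hab⟩)
  have hz1 : z ≠ 1 := by rintro rfl; rw [orderOf_one] at hz; exact hp.one_lt.ne hz
  obtain ⟨V, hV, hzV⟩ := exists_simple_not_mem z hz1
  have hk : repKer V = ⊥ := by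
    by_contra h
    exact hzV (hmono _ inferInstance h)
  exact ⟨V, hV, hk, fun hd => not_cyclic_of_noncomm hnc (cyclic_of_faithful V hd hk)⟩

theorem mem_codSet_of_noncomm {G H : Type} [Group G] [Group H] [Finite H] (p j : ℕ) (hp : p.Prime)
    (hdeg : ∀ V : FDRep ℂ G, Simple V → repDegree V = 1 ∨ repDegree V = p)
    (f : G →* H) (hf : Function.Surjective f) (hcard : Nat.card H = p ^ (j + 1))
    (hnc : ∃ a b : H, a * b ≠ b * a) (hc : IsCyclic (Subgroup.center H)) :
    p ^ j ∈ codSet G := by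
  obtain ⟨V, hV, hk, hd⟩ := exists_faithful p (j + 1) hp hcard hnc hc
  obtain ⟨W, hW, hWd, hWk⟩ := exists_pullback_hom f hf V hV
  refine ⟨W, hW, ?_⟩
  have hWp : repDegree W = p := (hdeg W hW).resolve_left (by rw [hWd]; exact hd)
  rw [codegree, hWp, hWk, hk, MonoidHom.comap_bot, Subgroup.index_ker,
    MonoidHom.range_eq_top.mpr hf, Subgroup.card_top, hcard, pow_succ, Nat.mul_div_cancel _ hp.pos]

theorem codSet_subset {G : Type} [Group G] [Finite G] (p n : ℕ) (hp : p.Prime)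
    (hcard : Nat.card G = p ^ n) (hncy : ¬ IsCyclic G)
    (hdeg : ∀ V : FDRep ℂ G, Simple V → repDegree V = 1 ∨ repDegree V = p) (m : ℕ)
    (hm : m ∈ codSet G) : ∃ i ≤ n - 1, m = p ^ i := by
  obtain ⟨V, hV, rfl⟩ := hm
  obtain ⟨k, hk, hki⟩ := index_pow p n hp hcard (repKer V)
  rcases hdeg V hV with h | h
  · refine ⟨k, ?_, by rw [codegree, hki, h, Nat.div_one]⟩
    have : k ≠ n := by
      rintro rfl
      apply hncy
      apply cyclic_of_faithful V h
      rw [← Subgroup.card_eq_one]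
      have := Subgroup.card_mul_index (repKer V)
      rw [hki, hcard] at this
      exact Nat.eq_of_mul_eq_mul_right (pow_pos hp.pos k) (by rw [this, one_mul])
    omega
  · cases k with
    | zero =>
      exfalso
      obtain ⟨a, b, hab⟩ := noncomm_of_degree V (irr_of_simple V hV)
        (by rw [h]; exact hp.one_lt.ne')
      have : Nat.card (G ⧸ repKer V) = 1 := by
        change (repKer V).index = 1
        rw [hki, pow_zero]
      have := (Nat.card_eq_one_iff_unique.mp this).1
      exact hab (Subsingleton.elim _ _)
    | succ k =>
      exact ⟨k, by omega, by rw [codegree, hki, h, pow_succ, Nat.mul_div_cancel _ hp.pos]⟩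

theorem pow_mem_codSet_of_cyclic {G : Type} [Group G] (p m : ℕ) (hp : p.Prime)
    (f : G →* Multiplicative (ZMod (p ^ m))) (hf : Function.Surjective f) (i : ℕ) (hi : i ≤ m) :
    p ^ i ∈ codSet G := by
  haveI : NeZero (p ^ i) := ⟨pow_ne_zero _ hp.ne_zero⟩
  obtain ⟨g, hg⟩ := exists_zmod_hom (p ^ m) (Multiplicative.ofAdd (1 : ZMod (p ^ i))) (by
    rw [← orderOf_dvd_iff_pow_eq_one, orderOf_zmod_gen]; exact pow_dvd_pow _ hi)
  have hgs : Function.Surjective g := by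
    intro x
    obtain ⟨k, rfl⟩ := zmod_gen _ x
    exact ⟨(Multiplicative.ofAdd 1) ^ k, by rw [map_pow, hg]⟩
  have := mem_codSet_of_cyclic (g.comp f) (hgs.comp hf) inferInstance
  rwa [show Nat.card (Multiplicative (ZMod (p ^ i))) = p ^ i from Nat.card_zmod _] at this

theorem backward_one (p n : ℕ) (hp : p.Prime) (G : Type) [Group G] [Finite G]
    (hcard : Nat.card G = p ^ n) (hn : 2 ≤ n)
    (h : Nonempty (G ≃* Multiplicative (ZMod (p ^ (n - 1))) × Multiplicative (ZMod p))) :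
    codSet G = {m | ∃ i ≤ n - 1, m = p ^ i} := by
  obtain ⟨e⟩ := h
  have hcomm : ∀ a b : G, a * b = b * a := by
    intro a b
    apply e.injective
    rw [map_mul, map_mul, mul_comm]
  have hpow : ∀ a : G, a ^ (p ^ (n - 1)) = 1 := by
    intro a
    apply e.injective
    rw [map_pow, map_one]
    ext1
    · rw [Prod.pow_fst, Prod.fst_one, ← orderOf_dvd_iff_pow_eq_one]
      have := orderOf_dvd_natCard (e a).1
      rwa [show Nat.card (Multiplicative (ZMod (p ^ (n - 1)))) = p ^ (n - 1) from
        Nat.card_zmod _] at this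
    · rw [Prod.pow_snd, Prod.snd_one, ← orderOf_dvd_iff_pow_eq_one]
      have := orderOf_dvd_natCard (e a).2
      rw [show Nat.card (Multiplicative (ZMod p)) = p from Nat.card_zmod _] at this
      exact this.trans (dvd_pow_self p (by omega))
  have hncy : ¬ IsCyclic G := by
    intro h
    obtain ⟨g, hg⟩ := h.exists_generator
    have h1 := orderOf_eq_card_of_forall_mem_zpowers hg
    have h2 := orderOf_dvd_iff_pow_eq_one.mpr (hpow g)
    rw [h1, hcard] at h2
    have := (Nat.pow_dvd_pow_iff_le_right hp.one_lt).mp h2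
    omega
  apply Set.Subset.antisymm
  · intro m hm
    refine codSet_subset p n hp hcard hncy (fun V hV => Or.inl ?_) m hm
    apply degree_one_of_comm V (irr_of_simple V hV)
    intro a b
    rw [hcomm a b]
    have : b * a * a⁻¹ * b⁻¹ = 1 := by group
    rw [this]; exact (repKer V).one_mem
  · rintro m ⟨i, hi, rfl⟩
    exact pow_mem_codSet_of_cyclic p (n - 1) hp
      ((MonoidHom.fst _ _).comp e.toMonoidHom) (Prod.fst_surjective.comp e.surjective) i hi

theorem backward_two (p n : ℕ) (hp : p.Prime) (G : Type) [Group G] [Finite G]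
    (hcard : Nat.card G = p ^ n) (hn : 4 ≤ n)
    (φ : Multiplicative (ZMod p) →* MulAut (Multiplicative (ZMod (p ^ (n - 1)))))
    (hφ : ∀ x, φ (Multiplicative.ofAdd (1 : ZMod p)) x = x ^ (1 + p ^ (n - 2)))
    (h : Nonempty (G ≃* Multiplicative (ZMod (p ^ (n - 1))) ⋊[φ] Multiplicative (ZMod p))) :
    codSet G = {m | ∃ i ≤ n - 1, m = p ^ i} := by
  obtain ⟨e⟩ := h
  haveI : NeZero p := ⟨hp.ne_zero⟩
  haveI : NeZero (p ^ (n - 2)) := ⟨pow_ne_zero _ hp.ne_zero⟩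
  obtain ⟨y, hy⟩ : ∃ y : G, e y = SemidirectProduct.inl (Multiplicative.ofAdd 1) := e.surjective _
  obtain ⟨β, hβ⟩ : ∃ β : G, e β = SemidirectProduct.inr (Multiplicative.ofAdd 1) := e.surjective _
  have hyo : orderOf y = p ^ (n - 1) := by
    rw [← e.orderOf_eq y, hy, orderOf_injective _ SemidirectProduct.inl_injective,
      orderOf_zmod_gen]
  have hconj : β * y * β⁻¹ = y ^ (1 + p ^ (n - 2)) := by
    apply e.injective
    rw [map_mul, map_mul, map_inv, map_pow, hy, hβ, ← map_pow, ← hφ,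
      SemidirectProduct.inl_aut, map_inv]
  have hne : β * y ≠ y * β := by
    intro h
    rw [h, mul_inv_cancel_right, pow_add, pow_one, eq_comm, mul_eq_left,
      ← orderOf_dvd_iff_pow_eq_one, hyo] at hconj
    have := (Nat.pow_dvd_pow_iff_le_right hp.one_lt).mp hconj
    omega
  have hnc : ∃ a b : G, a * b ≠ b * a := ⟨_, _, hne⟩
  have hidx : (Subgroup.zpowers y).index = p := by
    have := Subgroup.card_mul_index (Subgroup.zpowers y)
    rw [Nat.card_zpowers, hyo, hcard,
      show p ^ n = p ^ (n - 1) * p by rw [← pow_succ]; congr 1; omega] at this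
    exact Nat.eq_of_mul_eq_mul_left (pow_pos hp.pos _) this
  have hnorm := normal_of_index_prime p n hp (by omega) hcard _ hidx
  have hab : ∀ a ∈ Subgroup.zpowers y, ∀ b ∈ Subgroup.zpowers y, a * b = b * a := by
    rintro _ ⟨i, rfl⟩ _ ⟨j, rfl⟩
    exact ((Commute.refl y).zpow_zpow i j).eq
  have hdeg : ∀ V : FDRep ℂ G, Simple V → repDegree V = 1 ∨ repDegree V = p := by
    intro W hW
    have := degree_one_or_prime W (irr_of_simple W hW) _ hab (hidx ▸ hp)
    rwa [hidx] at this
  have hcen : Subgroup.center G ≤ Subgroup.zpowers y := by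
    intro x hx
    by_contra hxy
    have h3 : Subgroup.centralizer ({y} : Set G) = ⊤ := by
      rcases eq_or_top_of_prime_index (Subgroup.zpowers y) (Subgroup.centralizer ({y} : Set G))
        (hidx ▸ hp) (fun a ha => by
          rw [Subgroup.mem_centralizer_iff]; rintro h rfl
          exact hab _ (Subgroup.mem_zpowers _) a ha) with h | h
      · have : x ∈ Subgroup.centralizer ({y} : Set G) := by
          rw [Subgroup.mem_centralizer_iff]; rintro h rfl
          exact Subgroup.mem_center_iff.mp hx _
        rw [h] at this; exact absurd this hxy
      · exact h
    have : β ∈ Subgroup.centralizer ({y} : Set G) := h3 ▸ Subgroup.mem_top β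
    rw [Subgroup.mem_centralizer_iff] at this
    exact hne (this y rfl).symm
  have hcc : IsCyclic (Subgroup.center G) :=
    isCyclic_of_injective (Subgroup.inclusion hcen) (Subgroup.inclusion_injective hcen)
  apply Set.Subset.antisymm
  · exact codSet_subset p n hp hcard (not_cyclic_of_noncomm hnc) hdeg
  · rintro m ⟨i, hi, rfl⟩
    by_cases hi2 : i = n - 1
    · subst hi2
      exact mem_codSet_of_noncomm p (n - 1) hp hdeg (MonoidHom.id G) Function.surjective_id
        (by rw [hcard]; congr 1; omega) hnc hcc
    obtain ⟨f1, hf1⟩ := exists_zmod_hom (p ^ (n - 1))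
      (Multiplicative.ofAdd (1 : ZMod (p ^ (n - 2)))) (by
        rw [← orderOf_dvd_iff_pow_eq_one, orderOf_zmod_gen]; exact pow_dvd_pow _ (by omega))
    have hf1p : ∀ x, f1 (φ (Multiplicative.ofAdd 1) x) = f1 x := by
      intro x
      rw [hφ, map_pow, pow_add, pow_one, mul_eq_left, ← orderOf_dvd_iff_pow_eq_one]
      have := orderOf_dvd_natCard (f1 x)
      rwa [show Nat.card (Multiplicative (ZMod (p ^ (n - 2)))) = p ^ (n - 2) from
        Nat.card_zmod _] at this
    have hf1i : ∀ (i : ℕ) x, f1 (φ ((Multiplicative.ofAdd 1) ^ i) x) = f1 x := by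
      intro i
      induction i with
      | zero => intro x; simp
      | succ i ih => intro x; rw [pow_succ', map_mul, MulAut.mul_apply, hf1p, ih]
    let F := SemidirectProduct.lift (φ := φ) f1 (1 : Multiplicative (ZMod p) →* _) (by
      intro g
      obtain ⟨i, rfl⟩ := zmod_gen _ g
      refine MonoidHom.ext fun x => ?_
      change f1 (φ _ x) = 1 * f1 x * 1⁻¹
      rw [hf1i, one_mul, inv_one, mul_one])
    have hF : Function.Surjective F := by
      intro x
      obtain ⟨k, rfl⟩ := zmod_gen _ x
      exact ⟨SemidirectProduct.inl ((Multiplicative.ofAdd 1) ^ k), by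
        rw [SemidirectProduct.lift_inl, map_pow, hf1]⟩
    exact pow_mem_codSet_of_cyclic p (n - 2) hp (F.comp e.toMonoidHom)
      (hF.comp e.surjective) i (by omega)

theorem quotient_center_card {G : Type} [Group G] [Finite G] (p n : ℕ) (hp : p.Prime)
    (hcard : Nat.card G = p ^ n) (hnc : ∃ a b : G, a * b ≠ b * a) :
    ∃ k, 2 ≤ k ∧ k < n ∧ Nat.card (G ⧸ Subgroup.center G) = p ^ k := by
  haveI := Fact.mk hp
  haveI : Nontrivial G := by obtain ⟨a, b, hab⟩ := hnc; exact ⟨_, _, hab⟩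
  have hG : IsPGroup p G := IsPGroup.of_card hcard
  obtain ⟨k, hk, hki⟩ := index_pow p n hp hcard (Subgroup.center G)
  have hcn := hG.center_nontrivial
  have h1 := Finite.one_lt_card (α := Subgroup.center G)
  refine ⟨k, ?_, ?_, hki⟩
  · by_contra hk2
    obtain ⟨a, b, hab⟩ := hnc
    rcases (show k = 0 ∨ k = 1 by omega) with rfl | rfl
    · rw [pow_zero, Subgroup.index_eq_one] at hki
      exact hab (Subgroup.mem_center_iff.mp (hki ▸ Subgroup.mem_top b) a)
    · exact hab (comm_of_central_index _ le_rfl (by rw [hki, pow_one]; exact hp) a b)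
  · apply lt_of_le_of_ne hk
    rintro rfl
    have := Subgroup.card_mul_index (Subgroup.center G)
    rw [hki, hcard] at this
    have := Nat.eq_of_mul_eq_mul_right (pow_pos hp.pos k) (this.trans (one_mul _).symm)
    omega

theorem class_bound (p : ℕ) (hp : p.Prime) (n : ℕ) : ∀ (G : Type) [Group G] [Finite G]
    (_ : Nat.card G = p ^ n), Group.nilpotencyClass G ≤ 1 ∨ Group.nilpotencyClass G + 1 ≤ n := by
  haveI := Fact.mk hp
  induction n using Nat.strong_induction_on with
  | _ n ih =>
    intro G _ _ hcard
    have hG : IsPGroup p G := IsPGroup.of_card hcard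
    haveI : Group.IsNilpotent G := hG.isNilpotent
    by_cases hnc : ∃ a b : G, a * b ≠ b * a
    · right
      haveI : Nontrivial G := by obtain ⟨a, b, hab⟩ := hnc; exact ⟨_, _, hab⟩
      obtain ⟨k, hk2, hkn, hk⟩ := quotient_center_card p n hp hcard hnc
      rw [Group.nilpotencyClass_eq_quotient_center_plus_one]
      rcases ih k hkn (G ⧸ Subgroup.center G) hk with h | h <;> omega
    · left
      push Not at hnc
      exact Group.IsNilpotent.nilpotencyClass_le_one_iff.mpr ⟨⟨hnc⟩⟩

theorem max_class_quotients (p : ℕ) (hp : p.Prime) (n : ℕ) : ∀ (G : Type) [Group G] [Finite G]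
    (_ : Nat.card G = p ^ n) (_ : Group.nilpotencyClass G = n - 1) (_ : 3 ≤ n)
    (j : ℕ) (_ : 2 ≤ j) (_ : j ≤ n - 1),
    ∃ (H : Type) (_ : Group H) (_ : Finite H) (f : G →* H), Function.Surjective f ∧
      Nat.card H = p ^ (j + 1) ∧ (∃ a b : H, a * b ≠ b * a) ∧ IsCyclic (Subgroup.center H) := by
  haveI := Fact.mk hp
  induction n with
  | zero => intros; omega
  | succ n ih =>
    intro G _ _ hcard hcl hn j hj hjn
    have hG : IsPGroup p G := IsPGroup.of_card hcard
    haveI : Group.IsNilpotent G := hG.isNilpotent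
    have hnc : ∃ a b : G, a * b ≠ b * a := by
      by_contra h
      push Not at h
      have : Group.nilpotencyClass G ≤ 1 := Group.IsNilpotent.nilpotencyClass_le_one_iff.mpr ⟨⟨h⟩⟩
      omega
    haveI : Nontrivial G := by obtain ⟨a, b, hab⟩ := hnc; exact ⟨_, _, hab⟩
    obtain ⟨k, hk2, hkn, hk⟩ := quotient_center_card p _ hp hcard hnc
    have hcl2 := hcl
    rw [Group.nilpotencyClass_eq_quotient_center_plus_one] at hcl2
    have hkn' : k = n := by
      rcases class_bound p hp k (G ⧸ Subgroup.center G) hk with h | h <;> omega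
    subst hkn'
    have hcz : Nat.card (Subgroup.center G) = p := by
      have := Subgroup.card_mul_index (Subgroup.center G)
      rw [show (Subgroup.center G).index = p ^ k from hk, hcard, pow_succ'] at this
      exact Nat.eq_of_mul_eq_mul_right (pow_pos hp.pos k) this
    by_cases hjk : j = k
    · exact ⟨G, inferInstance, inferInstance, MonoidHom.id G, Function.surjective_id,
        by rw [hcard, hjk], hnc, isCyclic_of_prime_card hcz⟩
    · obtain ⟨H, hH, hfin, f, hf, h⟩ := ih (G ⧸ Subgroup.center G) hk (by omega) (by omega)
        j hj (by omega)
      exact ⟨H, hH, hfin, f.comp (QuotientGroup.mk' _),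
        hf.comp (QuotientGroup.mk'_surjective _), h⟩

theorem backward_three (p n : ℕ) (hp : p.Prime) (G : Type) [Group G] [Finite G]
    (hcard : Nat.card G = p ^ n) (hn : 2 ≤ n)
    (hcl : nilClass G = n - 1) (hcd : (cdSet G).ncard = 2) :
    codSet G = {m | ∃ i ≤ n - 1, m = p ^ i} := by
  haveI := Fact.mk hp
  have hG : IsPGroup p G := IsPGroup.of_card hcard
  haveI : Group.IsNilpotent G := hG.isNilpotent
  rw [nilClass_eq] at hcl
  have hnc : ∃ a b : G, a * b ≠ b * a := by
    by_contra h
    push Not at h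
    have : cdSet G = {1} := by
      ext m
      constructor
      · rintro ⟨V, hV, rfl⟩
        apply degree_one_of_comm V (irr_of_simple V hV)
        intro a b
        rw [h a b]
        have : b * a * a⁻¹ * b⁻¹ = 1 := by group
        rw [this]; exact (repKer V).one_mem
      · rintro rfl; exact one_mem_cdSet
    rw [this, Set.ncard_singleton] at hcd
    omega
  have hn3 : 3 ≤ n := by
    by_contra h
    obtain ⟨a, b, hab⟩ := hnc
    exact hab ((Group.IsNilpotent.nilpotencyClass_le_one_iff.mp
      (by omega : Group.nilpotencyClass G ≤ 1)).is_comm.comm a b)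
  have hquot := max_class_quotients p hp n G hcard hcl hn3
  have hpcd : p ∈ cdSet G := by
    obtain ⟨H, hH, hfin, f, hf, hHc, hHnc, hHcc⟩ := hquot 2 le_rfl (by omega)
    obtain ⟨V, hV, hk, hd⟩ := exists_faithful p _ hp hHc hHnc hHcc
    obtain ⟨A, hA⟩ := Sylow.exists_subgroup_card_pow_prime (G := H) p (n := 2)
      (by rw [hHc]; exact pow_dvd_pow _ (by omega))
    have hidx : A.index = p := by
      have := Subgroup.card_mul_index A
      rw [hA, hHc, pow_succ p 2] at this
      exact Nat.eq_of_mul_eq_mul_left (pow_pos hp.pos _) this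
    have hAn := normal_of_index_prime p _ hp (by omega) hHc A hidx
    have hAc : ∀ a ∈ A, ∀ b ∈ A, a * b = b * a := by
      intro a ha b hb
      have := IsPGroup.commutative_of_card_eq_prime_sq hA (⟨a, ha⟩ : A) ⟨b, hb⟩
      exact congrArg Subtype.val this
    obtain ⟨W, hW, hWd, -⟩ := exists_pullback_hom f hf V hV
    refine ⟨W, hW, ?_⟩
    rw [hWd, ← hidx]
    exact (degree_one_or_prime V (irr_of_simple V hV) A hAc (hidx ▸ hp)).resolve_left hd
  have hdeg : ∀ V : FDRep ℂ G, Simple V → repDegree V = 1 ∨ repDegree V = p := by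
    intro V hV
    have hsub : ({1, p} : Set ℕ) ⊆ cdSet G := by
      rintro m (rfl | rfl)
      · exact one_mem_cdSet
      · exact hpcd
    have := Set.eq_of_subset_of_ncard_le hsub
      (by rw [hcd, Set.ncard_pair hp.one_lt.ne]) (Set.finite_of_ncard_ne_zero (by omega))
    have h2 : repDegree V ∈ cdSet G := ⟨V, hV, rfl⟩
    rw [← this] at h2
    exact h2
  apply Set.Subset.antisymm
  · exact codSet_subset p n hp hcard (not_cyclic_of_noncomm hnc) hdeg
  · rintro m ⟨i, hi, rfl⟩
    by_cases hi2 : 2 ≤ i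
    · obtain ⟨H, hH, hfin, f, hf, hHc, hHnc, hHcc⟩ := hquot i hi2 hi
      exact mem_codSet_of_noncomm p i hp hdeg f hf hHc hHnc hHcc
    · obtain ⟨A, hA⟩ := Sylow.exists_subgroup_card_pow_prime (G := G) p (n := n - i)
        (by rw [hcard]; exact pow_dvd_pow _ (by omega))
      have hidx : A.index = p ^ i := by
        have := Subgroup.card_mul_index A
        rw [hA, hcard, show p ^ n = p ^ (n - i) * p ^ i by rw [← pow_add]; congr 1; omega] at this
        exact Nat.eq_of_mul_eq_mul_left (pow_pos hp.pos _) this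
      rcases (show i = 0 ∨ i = 1 by omega) with rfl | rfl
      · rw [pow_zero]
        have := mem_codSet_of_cyclic (1 : G →* Unit) (fun x => ⟨1, rfl⟩) inferInstance
        rwa [Nat.card_unique] at this
      · rw [pow_one] at hidx ⊢
        have hAn := normal_of_index_prime p n hp (by omega) hcard A hidx
        have := mem_codSet_of_cyclic (QuotientGroup.mk' A) (QuotientGroup.mk'_surjective A)
          (isCyclic_of_prime_card (p := p) hidx)
        rwa [show Nat.card (G ⧸ A) = p from hidx] at this

/-- Theorem A: for a `p`-group of order `p^n ≥ p^2`, `cod(G) = {p^i | 0 ≤ i ≤ n-1}` iff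
`G ≅ ℤ_{p^{n-1}} × ℤ_p`, or `n ≥ 4`, `G` has class 2 and `G ≅ ℤ_{p^{n-1}} ⋊ ℤ_p` with the
generator of `ℤ_p` acting by `x ↦ x^{1+p^{n-2}}`, or `G` has maximal class and `|cd(G)| = 2`. -/
theorem full_codegrees_iff (p n : ℕ) (hp : p.Prime) (G : Type) [Group G] [Fintype G]
    (hcard : Fintype.card G = p ^ n) (hn : 2 ≤ n) :
    codSet G = {m | ∃ i ≤ n - 1, m = p ^ i} ↔
      (Nonempty (G ≃* Multiplicative (ZMod (p ^ (n - 1))) × Multiplicative (ZMod p)) ∨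
        (4 ≤ n ∧ nilClass G = 2 ∧
          ∃ φ : Multiplicative (ZMod p) →* MulAut (Multiplicative (ZMod (p ^ (n - 1)))),
            (∀ x, φ (Multiplicative.ofAdd (1 : ZMod p)) x = x ^ (1 + p ^ (n - 2))) ∧
            Nonempty (G ≃* Multiplicative (ZMod (p ^ (n - 1))) ⋊[φ] Multiplicative (ZMod p))) ∨
        (nilClass G = n - 1 ∧ (cdSet G).ncard = 2)) := by
  have hc : Nat.card G = p ^ n := by rw [Nat.card_eq_fintype_card, hcard]
  constructor
  · exact forward p n hp G hc hn
  · rintro (h | ⟨h4, -, φ, hφ, h⟩ | ⟨h1, h2⟩)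
    · exact backward_one p n hp G hc hn h
    · exact backward_two p n hp G hc h4 φ hφ h
    · exact backward_three p n hp G hc hn h1 h2
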